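/- arXiv:2407.04462 — 7 statements merged into one kernel-verified Lean document; each statement's English description precedes it below -/
import Mathlib

section
/- Let Σ = {a_1, …, a_k} be an alphabet with k ≥ 2 distinct letters. There exists a monoid homomorphism Φ from (Σ*, concatenation) to the multiplicative monoid of 3(k−1) × 3(k−1) integer matrices such that for every word w over Σ and all indices 1 ≤ i < j ≤ k, the entry of Φ(w) in row i and column 2(k−1) + (j−1) equals f^w_{a_i a_{i+1} ⋯ a_j}, the number of occurrences of the word a_i a_{i+1} ⋯ a_j as a factor of w. -/
/-- Number of occurrences of `u` as a factor of `w`. -/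
def factorCount {α : Type*} [DecidableEq α] (w u : List α) : ℕ :=
  ((Finset.range (w.length + 1 - u.length)).filter fun i => (w.drop i).take u.length = u).card

/-!
Write `Y(w)` for the matrix with a `1` at `(l, j)`, `l ≤ j`, when `a_{l+1} ⋯ a_{j+1}` is a prefix
of `w`, and `F(w)` for the matrix of the counts of `a_i ⋯ a_{j+1}`. Prepending a letter `c` creates
an occurrence of `a_i ⋯ a_{j+1}` exactly when `c = a_i` and `a_{i+1} ⋯ a_{j+1}` is a prefix of `w`,
and `a_{l+1} ⋯ a_{j+1}` is a prefix of `c w` exactly when `c = a_{l+1}` and either `l = j` or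
`a_{l+2} ⋯ a_{j+1}` is a prefix of `w`. So the entries of `F` and `Y` on and above the diagonal
evolve linearly once a constant block `1` is adjoined, and the three blocks form the last column of
a product of `3 × 3` block matrices, one for each letter of `w`.
-/

theorem factorCount_nil {α : Type*} [DecidableEq α] {u : List α} (hu : u ≠ []) :
    factorCount [] u = 0 := by
  have hpos : 0 < u.length := List.length_pos_iff.mpr hu
  have hlen : ([] : List α).length + 1 - u.length = 0 := by
    rw [List.length_nil]; omega
  rw [factorCount, hlen, Finset.range_zero, Finset.filter_empty, Finset.card_empty]

theorem factorCount_cons {α : Type*} [DecidableEq α] (c : α) (w u : List α) :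
    factorCount (c :: w) u = factorCount w u + if u <+: c :: w then 1 else 0 := by
  unfold factorCount
  by_cases h : u.length ≤ w.length + 1
  · have hlen : (c :: w).length + 1 - u.length = (w.length + 1 - u.length) + 1 := by
      rw [List.length_cons]; omega
    simp only [hlen, Finset.card_filter, Finset.sum_range_succ', List.drop_succ_cons,
      List.drop_zero, List.prefix_iff_eq_take, eq_comm]
  · have hlen : (c :: w).length + 1 - u.length = 0 := by
      rw [List.length_cons]; omega
    have hlen' : w.length + 1 - u.length = 0 := by omega
    have hprefix : ¬ u <+: c :: w := fun hp => h hp.length_le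
    rw [hlen, hlen', if_neg hprefix, add_zero, Finset.range_zero, Finset.filter_empty,
      Finset.filter_empty]

theorem filter_range_le_le {k j : ℕ} (i : ℕ) (hj : j < k) :
    ((List.range k).filter fun t => i ≤ t ∧ t ≤ j) = List.Ico i (j + 1) := by
  have hlt (t : ℕ) : t ≤ j ↔ t < j + 1 := Nat.lt_succ_iff.symm
  simp only [hlt, ← List.Ico.zero_bot, Bool.decide_and, ← List.filter_filter]
  rw [List.Ico.filter_lt, min_eq_right (Nat.succ_le_of_lt hj), List.Ico.filter_le, Nat.zero_max]

theorem filter_finRange_le_le {k : ℕ} [NeZero k] (i j : Fin k) :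
    ((List.finRange k).filter fun t => i ≤ t ∧ t ≤ j) =
      (List.Ico i (j + 1)).map (Fin.ofNat k) := by
  refine List.map_injective_iff.mpr Fin.val_injective ?_
  calc ((List.finRange k).filter fun t => i ≤ t ∧ t ≤ j).map Fin.val
      = ((List.finRange k).map Fin.val).filter fun t => (i : ℕ) ≤ t ∧ t ≤ (j : ℕ) :=
        (List.filter_map (p := fun t : ℕ => decide ((i : ℕ) ≤ t ∧ t ≤ (j : ℕ)))).symm
    _ = List.Ico i (j + 1) := by
        rw [List.map_coe_finRange_eq_range, filter_range_le_le i j.isLt]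
    _ = ((List.Ico i (j + 1)).map (Fin.ofNat k)).map Fin.val := by
        rw [List.map_map, List.map_congr_left (g := id), List.map_id]
        exact fun t ht => Nat.mod_eq_of_lt ((List.Ico.mem.mp ht).2.trans_le j.isLt)

section

variable {α : Type*} [DecidableEq α] (R : Type*) [Semiring R] (a : ℕ → α) (n : ℕ)

/-- The diagonal `0`-`1` matrix recording the positions at which the sequence of letters `s` takes
the value `c`. -/
def letterDiagonal {n : ℕ} (s : Fin n → α) (c : α) : Matrix (Fin n) (Fin n) R :=
  Matrix.diagonal fun i => if s i = c then 1 else 0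

/-- The nilpotent shift matrix, with ones exactly on the first superdiagonal: multiplying by it on
the left moves every row up by one. -/
def shiftMatrix : Matrix (Fin n) (Fin n) R :=
  Matrix.of fun l m => if (m : ℕ) = l + 1 then 1 else 0

/-- The matrix recording which of the words `a_{l+1} ⋯ a_{j+1}`, `l ≤ j`, are prefixes of `w`.
Entries below the diagonal are `0`, although the empty word they would stand for is a prefix. -/
def prefixMatrix (w : List α) : Matrix (Fin n) (Fin n) R :=
  Matrix.of fun l j => if l ≤ j ∧ (List.Ico (l + 1) (j + 2)).map a <+: w then 1 else 0

/-- The image of a letter under `wordMatrix`, a `3 × 3` matrix of `n × n` blocks. -/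
def letterMatrix (c : α) : Matrix (Fin 3) (Fin 3) (Matrix (Fin n) (Fin n) R) :=
  let start := letterDiagonal R (fun i : Fin n => a i) c
  let next := letterDiagonal R (fun i : Fin n => a (i + 1)) c
  !![1, start, 0;
     0, next * shiftMatrix R n, next;
     0, 0, 1]

/-- The monoid homomorphism extending `letterMatrix`. On and above its diagonal, the top right block
of the image of a word counts the factors `a_i ⋯ a_{j+1}`. -/
def wordMatrix : FreeMonoid α →* Matrix (Fin 3) (Fin 3) (Matrix (Fin n) (Fin n) R) :=
  FreeMonoid.lift (letterMatrix R a n)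

variable {R n} in
theorem shiftMatrix_mul_of (f : ℕ → Fin n → R) (hf : f n = 0) :
    shiftMatrix R n * Matrix.of (fun l : Fin n => f l) = Matrix.of fun l : Fin n => f (l + 1) := by
  ext l j
  simp only [shiftMatrix, Matrix.mul_apply, Matrix.of_apply, ite_mul, one_mul, zero_mul]
  rcases (Nat.succ_le_of_lt l.isLt).lt_or_eq with h | h
  · rw [Finset.sum_eq_single_of_mem ⟨l + 1, h⟩ (Finset.mem_univ _)
      fun m _ hm => if_neg fun hml => hm (Fin.ext hml), if_pos rfl]
  · rw [Finset.sum_eq_zero fun m _ => if_neg (by omega), show (l : ℕ) + 1 = n from h, hf,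
      Pi.zero_apply]

theorem prefixMatrix_nil : prefixMatrix R a n [] = 0 := by
  ext l j
  refine if_neg ?_
  rintro ⟨hlj, hprefix⟩
  rw [List.prefix_nil, List.map_eq_nil_iff, List.Ico.eq_empty_iff] at hprefix
  omega

theorem prefixMatrix_cons (c : α) (w : List α) :
    prefixMatrix R a n (c :: w) =
      letterDiagonal R (fun i : Fin n => a (i + 1)) c *
        (shiftMatrix R n * prefixMatrix R a n w + 1) := by
  have hshift : shiftMatrix R n * prefixMatrix R a n w = Matrix.of fun l j : Fin n =>
      if (l + 1 : ℕ) ≤ j ∧ (List.Ico (l + 2) (j + 2)).map a <+: w then 1 else 0 :=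
    shiftMatrix_mul_of
      (fun l j => if l ≤ j ∧ (List.Ico (l + 1) (j + 2)).map a <+: w then 1 else 0)
      (funext fun j => if_neg fun h => j.isLt.not_ge h.1)
  ext l j
  rw [hshift, letterDiagonal, Matrix.diagonal_mul, Matrix.add_apply, Matrix.one_apply]
  simp only [prefixMatrix, Matrix.of_apply]
  rcases lt_trichotomy l j with h | rfl | h
  · have hword : List.Ico (l + 1) (j + 2) = (l + 1 : ℕ) :: List.Ico (l + 2) (j + 2) :=
      List.Ico.eq_cons (by omega)
    by_cases hc : a (l + 1) = c <;> simp [hword, h, h.le, h.ne, hc]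
  · simp
  · simp [h.not_ge, h.ne', show ¬ (l : ℕ) + 1 ≤ j by omega]

theorem wordMatrix_cons (c : α) (w : List α) :
    wordMatrix R a n (FreeMonoid.ofList (c :: w)) =
      letterMatrix R a n c * wordMatrix R a n (FreeMonoid.ofList w) := by
  rw [FreeMonoid.ofList_cons, map_mul, wordMatrix, FreeMonoid.lift_eval_of]

theorem wordMatrix_two_two (w : List α) :
    wordMatrix R a n (FreeMonoid.ofList w) 2 2 = 1 := by
  induction w with
  | nil => simp
  | cons c w ih =>
    rw [wordMatrix_cons, Matrix.mul_apply, Fin.sum_univ_three]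
    simp [letterMatrix, ih]

theorem wordMatrix_one_two (w : List α) :
    wordMatrix R a n (FreeMonoid.ofList w) 1 2 = prefixMatrix R a n w := by
  induction w with
  | nil => simp [prefixMatrix_nil]
  | cons c w ih =>
    rw [wordMatrix_cons, Matrix.mul_apply, Fin.sum_univ_three]
    simp [letterMatrix, ih, wordMatrix_two_two, prefixMatrix_cons, mul_add, mul_assoc]

theorem wordMatrix_zero_two_cons (c : α) (w : List α) :
    wordMatrix R a n (FreeMonoid.ofList (c :: w)) 0 2 =
      wordMatrix R a n (FreeMonoid.ofList w) 0 2 +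
        letterDiagonal R (fun i : Fin n => a i) c * prefixMatrix R a n w := by
  rw [wordMatrix_cons, Matrix.mul_apply, Fin.sum_univ_three]
  simp [letterMatrix, wordMatrix_one_two]

theorem wordMatrix_zero_two_apply (w : List α) {i j : Fin n} (hij : i ≤ j) :
    wordMatrix R a n (FreeMonoid.ofList w) 0 2 i j =
      factorCount w ((List.Ico i (j + 2)).map a) := by
  have hword : (List.Ico i (j + 2)).map a = a i :: (List.Ico (i + 1) (j + 2)).map a := by
    rw [List.Ico.eq_cons (by omega), List.map_cons]
  have hne : (List.Ico i (j + 2)).map a ≠ [] := hword ▸ List.cons_ne_nil _ _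
  induction w with
  | nil => simp [factorCount_nil hne]
  | cons c w ih =>
    rw [wordMatrix_zero_two_cons, Matrix.add_apply, ih, factorCount_cons, letterDiagonal,
      Matrix.diagonal_mul, hword, Nat.cast_add]
    by_cases hc : a i = c <;> simp [prefixMatrix, hij, hc]

end

theorem stmt2_general {α : Type*} [DecidableEq α] (R : Type*) [Semiring R] (a : ℕ → α) (n : ℕ) :
    ∃ Φ : FreeMonoid α →* Matrix (Fin (3 * n)) (Fin (3 * n)) R,
      ∀ (w : List α) (i j : ℕ), i < j → j ≤ n →
        ∀ (hr : i < 3 * n) (hc : 2 * n + j - 1 < 3 * n),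
          Φ (FreeMonoid.ofList w) ⟨i, hr⟩ ⟨2 * n + j - 1, hc⟩ =
            factorCount w ((List.Ico i (j + 1)).map a) := by
  let flatten : Matrix (Fin 3) (Fin 3) (Matrix (Fin n) (Fin n) R) ≃+*
      Matrix (Fin (3 * n)) (Fin (3 * n)) R :=
    (Matrix.compRingEquiv (Fin 3) (Fin n) R).trans (Matrix.reindexRingEquiv R finProdFinEquiv)
  refine ⟨flatten.toMonoidHom.comp (wordMatrix R a n), fun w i j hij hj hr hc => ?_⟩
  obtain ⟨j, rfl⟩ := Nat.exists_eq_add_of_le' (Nat.one_le_of_lt hij)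
  have hrow : (⟨i, hr⟩ : Fin (3 * n)) = finProdFinEquiv (0, ⟨i, by omega⟩) := by
    ext; simp
  have hcol : (⟨2 * n + (j + 1) - 1, hc⟩ : Fin (3 * n)) = finProdFinEquiv (2, ⟨j, hj⟩) := by
    ext; simp only [finProdFinEquiv_apply_val, Fin.val_two]; omega
  rw [hrow, hcol]
  simpa [flatten] using wordMatrix_zero_two_apply R a n w (Fin.mk_le_mk.mpr (Nat.le_of_lt_succ hij))

/-- There is a monoid homomorphism `Φ` from words over the `k`-letter alphabet `Fin k`
(with letters `a_1 < ⋯ < a_k` being `0 < 1 < ⋯ < k-1`) to `3(k-1) × 3(k-1)` integer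
matrices, such that for `1 ≤ i < j ≤ k` (here `i, j : Fin k`, `i < j`, 0-indexed) the entry
of `Φ(w)` in (1-indexed) row `i` and column `2(k-1) + (j-1)` is the number of occurrences
of the word `a_i a_{i+1} ⋯ a_j` as a factor of `w`. -/
theorem stmt2 (k : ℕ) (hk : 2 ≤ k) :
    ∃ Φ : List (Fin k) → Matrix (Fin (3 * (k - 1))) (Fin (3 * (k - 1))) ℤ,
      (∀ w1 w2 : List (Fin k), Φ (w1 ++ w2) = Φ w1 * Φ w2) ∧ Φ [] = 1 ∧
      ∀ (w : List (Fin k)) (i j : Fin k), i < j →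
        ∀ (hr : (i : ℕ) < 3 * (k - 1)) (hc : 2 * (k - 1) + (j : ℕ) - 1 < 3 * (k - 1)),
          Φ w ⟨(i : ℕ), hr⟩ ⟨2 * (k - 1) + (j : ℕ) - 1, hc⟩ =
            (factorCount w ((List.finRange k).filter fun t => i ≤ t ∧ t ≤ j) : ℤ) := by
  have : NeZero k := ⟨by omega⟩
  obtain ⟨Φ, hΦ⟩ := stmt2_general ℤ (Fin.ofNat k) (k - 1)
  exact ⟨fun w => Φ (FreeMonoid.ofList w), fun _ _ => map_mul Φ _ _, map_one Φ,
    fun w i j hij hr hc => filter_finRange_le_le i j ▸ hΦ w i j hij (by omega) hr hc⟩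
end

section
/- Let Q = q_1•q_2•⋯•q_n be a generalized subsequence over Σ. For all words w1, w2 over Σ: |w1w2|_Q = Σ_{j=0}^{n} |w1|_{q_1•⋯•q_j} · |w2|_{q_{j+1}•⋯•q_n} + Σ_{j=1}^{n} Σ_{(u,v)} E^{w1}(q_1•⋯•q_{j−1}, u) · S^{w2}(v, q_{j+1}•⋯•q_n), where the inner sum ranges over all decompositions q_j = uv with u and v both nonempty, and where the empty sequence of factors (arising for j = 0, j = n, j = 1, or j = n in the respective places) is counted as having exactly one occurrence in every word. -/
/-- Number of occurrences of the generalized subsequence with factor list `Q` in the word `w`.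
The empty sequence of factors has exactly one occurrence in every word. -/
def gsCount {α : Type*} [DecidableEq α] : List (List α) → List α → ℕ
  | [], _ => 1
  | q :: Q, w =>
      ∑ i ∈ Finset.range (w.length + 1 - q.length),
        if (w.drop i).take q.length = q then gsCount Q (w.drop (i + q.length)) else 0

/-- Scattered-subword count `C(w, u)`: the number of occurrences of `u` as a
scattered subword (subsequence) of `w`. -/
def sCount {α : Type*} [DecidableEq α] : List α → List α → ℕ
  | _, [] => 1
  | [], _ :: _ => 0
  | a :: w, b :: u => sCount w (b :: u) + (if a = b then sCount w u else 0)

/-- Suffix-anchored count E^w(P, u): the number of occurrences of the generalized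
subsequence P•u in w whose last factor u ends exactly at the last position of w. -/
def eCount {α : Type*} [DecidableEq α] (w : List α) (P : List (List α)) (u : List α) : ℕ :=
  if u <:+ w then gsCount P (w.take (w.length - u.length)) else 0

/-- Prefix-anchored count S^w(u, P): the number of occurrences of the generalized
subsequence u•P in w whose first factor u starts exactly at the first position of w. -/
def sAnch {α : Type*} [DecidableEq α] (w : List α) (u : List α) (P : List (List α)) : ℕ :=
  if u <+: w then gsCount P (w.drop u.length) else 0

/-!
Sort the occurrences of `q :: Q` in `w₁ ++ w₂` by the position of the occurrence of `q`. Either `q`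
lies in `w₂`, and so do all later factors; or `q` straddles the boundary; or `q` lies in `w₁`, and
the remaining factors form an occurrence of `Q` in the rest of `w₁` followed by `w₂`, to which
induction on the number of factors applies. Sorting both sums of the formula by the position of `q`
gives the same three contributions.
-/

section

open Finset

variable {α : Type*} [DecidableEq α]

/-- For nonempty factors, the number of occurrences of `Q` in `w₁ ++ w₂` in which no factor
straddles the boundary: the first `j` factors occur in `w₁` and the remaining ones in `w₂`. -/
def splitCount (Q : List (List α)) (w₁ w₂ : List α) : ℕ :=
  ∑ j ∈ range (Q.length + 1), gsCount (Q.take j) w₁ * gsCount (Q.drop j) w₂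

/-- For nonempty factors, the number of occurrences of `Q` in `w₁ ++ w₂` in which some factor
straddles the boundary. That factor has index `j`, counted from `0`, and its first `k` letters are
the ones in `w₁`. -/
def straddleCount (Q : List (List α)) (w₁ w₂ : List α) : ℕ :=
  ∑ j ∈ range Q.length, ∑ k ∈ Ico 1 (Q.getD j []).length,
    eCount w₁ (Q.take j) ((Q.getD j []).take k) *
      sAnch w₂ ((Q.getD j []).drop k) (Q.drop (j + 1))

theorem gsCount_nil (w : List α) : gsCount [] w = 1 := by
  rw [gsCount]

theorem gsCount_cons_eq_sum_sAnch {q : List α} (hq : q ≠ []) (Q : List (List α)) (w : List α) :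
    gsCount (q :: Q) w = ∑ i ∈ range w.length, sAnch (w.drop i) q Q := by
  have hq_pos := List.length_pos_iff.mpr hq
  have sAnch_drop (i : ℕ) : sAnch (w.drop i) q Q =
      if (w.drop i).take q.length = q then gsCount Q (w.drop (i + q.length)) else 0 := by
    simp only [sAnch, List.prefix_iff_eq_take, List.drop_drop, eq_comm]
  simp only [gsCount, ← sAnch_drop]
  refine sum_subset (range_subset_range.mpr (by omega)) fun i _ hi => if_neg fun hpre => ?_
  have hlen := hpre.length_le
  simp only [mem_range, List.length_drop] at hi hlen
  omega

theorem gsCount_cons_append {q : List α} (hq : q ≠ []) (Q : List (List α)) (w₁ w₂ : List α) :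
    gsCount (q :: Q) (w₁ ++ w₂) =
      gsCount (q :: Q) w₂ + ∑ i ∈ range w₁.length, sAnch (w₁.drop i ++ w₂) q Q := by
  rw [gsCount_cons_eq_sum_sAnch hq, gsCount_cons_eq_sum_sAnch hq, List.length_append,
    sum_range_add, add_comm]
  congr 1
  · simp only [List.drop_append, List.drop_eq_nil_of_le (Nat.le_add_right _ _), List.nil_append,
      Nat.add_sub_cancel_left]
  · refine sum_congr rfl fun i hi => ?_
    rw [List.drop_append_of_le_length (mem_range.mp hi).le]

theorem sAnch_append_of_length_le {q w₁ : List α} (h : q.length ≤ w₁.length)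
    (Q : List (List α)) (w₂ : List α) :
    sAnch (w₁ ++ w₂) q Q = if q <+: w₁ then gsCount Q (w₁.drop q.length ++ w₂) else 0 := by
  rw [sAnch, List.drop_append_of_le_length h]
  exact if_congr (List.isPrefix_append_of_length h) rfl rfl

theorem sAnch_append_of_le_length {q w₁ : List α} (h : w₁.length ≤ q.length)
    (Q : List (List α)) (w₂ : List α) :
    sAnch (w₁ ++ w₂) q Q = if q.take w₁.length = w₁ then sAnch w₂ (q.drop w₁.length) Q else 0 := by
  split_ifs with htake
  · obtain ⟨v, rfl⟩ : w₁ <+: q := List.prefix_iff_eq_take.mpr htake.symm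
    simp [sAnch, List.prefix_append_right_inj]
  · refine if_neg fun hpre => htake ?_
    have hw₁ : w₁ <+: q := List.prefix_of_prefix_length_le (List.prefix_append _ _) hpre h
    exact (List.prefix_iff_eq_take.mp hw₁).symm

theorem sAnch_append {w₁ : List α} (hw₁ : w₁ ≠ []) (q : List α) (Q : List (List α))
    (w₂ : List α) :
    sAnch (w₁ ++ w₂) q Q =
      (if q <+: w₁ then gsCount Q (w₁.drop q.length ++ w₂) else 0) +
        ∑ k ∈ Ico 1 q.length, if q.take k = w₁ then sAnch w₂ (q.drop k) Q else 0 := by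
  have hw₁_pos := List.length_pos_iff.mpr hw₁
  have eq_length {k : ℕ} (hk : k ∈ Ico 1 q.length) (htake : q.take k = w₁) : k = w₁.length := by
    rw [← htake, List.length_take_of_le (mem_Ico.mp hk).2.le]
  rcases le_or_gt q.length w₁.length with hle | hlt
  · rw [sAnch_append_of_length_le hle, sum_eq_zero, add_zero]
    intro k hk
    exact if_neg fun htake => ((mem_Ico.mp hk).2.trans_le hle).ne (eq_length hk htake)
  · have hnot_prefix : ¬ q <+: w₁ := fun hpre => hlt.not_ge hpre.length_le
    rw [sAnch_append_of_le_length hlt.le, if_neg hnot_prefix, zero_add,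
      sum_eq_single_of_mem w₁.length (mem_Ico.mpr ⟨hw₁_pos, hlt⟩)]
    intro k hk hne
    exact if_neg fun htake => hne (eq_length hk htake)

theorem eCount_append (P : List (List α)) (t u : List α) :
    eCount (t ++ u) P u = gsCount P t := by
  simp [eCount]

theorem eCount_eq_zero_of_length_lt {w u : List α} (h : w.length < u.length)
    (P : List (List α)) : eCount w P u = 0 :=
  if_neg fun hsuf => h.not_ge hsuf.length_le

theorem eCount_nil_eq_sum {u : List α} (hu : u ≠ []) (w : List α) :
    eCount w [] u = ∑ i ∈ range w.length, if u = w.drop i then 1 else 0 := by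
  have hu_pos := List.length_pos_iff.mpr hu
  by_cases hsuf : u <:+ w
  · obtain ⟨t, rfl⟩ := hsuf
    rw [eCount_append, gsCount_nil, sum_eq_single_of_mem t.length (by simp [hu_pos])]
    · simp
    · intro i hi hne
      refine if_neg fun hdrop => hne ?_
      have hlen := congrArg List.length hdrop
      simp only [mem_range, List.length_append, List.length_drop] at hi hlen
      omega
  · rw [eCount, if_neg hsuf, sum_eq_zero]
    rintro i -
    refine if_neg fun hdrop => hsuf ?_
    rw [hdrop]
    exact List.drop_suffix i w

-- If `q` runs into `u`, then what follows `q` is too short to end in `u`, and both sides are `0`.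
theorem sAnch_eq_ite_eCount_append (q : List α) (P : List (List α)) (t u : List α) :
    sAnch t q P = if q <+: t ++ u then eCount ((t ++ u).drop q.length) P u else 0 := by
  rcases le_or_gt q.length t.length with hle | hlt
  · simp only [List.isPrefix_append_of_length hle, List.drop_append_of_le_length hle,
      eCount_append, sAnch]
  · rw [sAnch, if_neg fun hpre => hlt.not_ge hpre.length_le]
    split_ifs with hpre
    · have hlen := hpre.length_le
      refine (eCount_eq_zero_of_length_lt ?_ P).symm
      simp only [List.length_drop, List.length_append] at hlen ⊢
      omega
    · rfl

theorem eCount_cons_eq_sum {q : List α} (hq : q ≠ []) (P : List (List α)) (w u : List α) :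
    eCount w (q :: P) u = ∑ i ∈ range w.length,
      if q <+: w.drop i then eCount ((w.drop i).drop q.length) P u else 0 := by
  have hq_pos := List.length_pos_iff.mpr hq
  by_cases hsuf : u <:+ w
  · obtain ⟨t, rfl⟩ := hsuf
    rw [eCount_append, gsCount_cons_eq_sum_sAnch hq, List.length_append, sum_range_add,
      sum_eq_zero (s := range u.length), add_zero]
    · refine sum_congr rfl fun i hi => ?_
      rw [List.drop_append_of_le_length (mem_range.mp hi).le, ← sAnch_eq_ite_eCount_append]
    · intro i hi
      rw [eCount_eq_zero_of_length_lt, ite_self]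
      simp only [mem_range, List.length_drop, List.length_append] at hi ⊢
      omega
  · rw [eCount, if_neg hsuf, sum_eq_zero]
    intro i _
    have hsuf' : ¬ u <:+ (w.drop i).drop q.length := fun h =>
      hsuf (h.trans ((List.drop_suffix _ _).trans (List.drop_suffix _ _)))
    rw [eCount, if_neg hsuf', ite_self]

theorem splitCount_cons {q : List α} (hq : q ≠ []) (Q : List (List α)) (w₁ w₂ : List α) :
    splitCount (q :: Q) w₁ w₂ = gsCount (q :: Q) w₂ + ∑ i ∈ range w₁.length,
      if q <+: w₁.drop i then splitCount Q ((w₁.drop i).drop q.length) w₂ else 0 := by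
  have sum_split_off_zero : splitCount (q :: Q) w₁ w₂ = gsCount (q :: Q) w₂ +
      ∑ j ∈ range (Q.length + 1), gsCount (q :: Q.take j) w₁ * gsCount (Q.drop j) w₂ := by
    rw [splitCount, List.length_cons, sum_range_succ', add_comm]
    simp only [List.take_succ_cons, List.drop_succ_cons, List.take_zero, List.drop_zero,
      gsCount_nil, one_mul]
  rw [sum_split_off_zero]
  congr 1
  simp only [gsCount_cons_eq_sum_sAnch hq, sum_mul, sAnch, ite_mul, zero_mul]
  rw [sum_comm]
  simp only [splitCount, sum_ite_irrel, sum_const_zero]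

theorem straddleCount_cons {q : List α} (hq : q ≠ []) (Q : List (List α)) (w₁ w₂ : List α) :
    straddleCount (q :: Q) w₁ w₂ =
      (∑ k ∈ Ico 1 q.length, eCount w₁ [] (q.take k) * sAnch w₂ (q.drop k) Q) +
        ∑ i ∈ range w₁.length,
          if q <+: w₁.drop i then straddleCount Q ((w₁.drop i).drop q.length) w₂ else 0 := by
  have sum_split_off_zero : straddleCount (q :: Q) w₁ w₂ =
      (∑ k ∈ Ico 1 q.length, eCount w₁ [] (q.take k) * sAnch w₂ (q.drop k) Q) +
        ∑ j ∈ range Q.length, ∑ k ∈ Ico 1 (Q.getD j []).length,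
          eCount w₁ (q :: Q.take j) ((Q.getD j []).take k) *
            sAnch w₂ ((Q.getD j []).drop k) (Q.drop (j + 1)) := by
    rw [straddleCount, List.length_cons, sum_range_succ', add_comm]
    simp only [List.getD_cons_succ, List.getD_cons_zero, List.take_succ_cons,
      List.drop_succ_cons, List.take_zero, List.drop_zero]
  rw [sum_split_off_zero]
  congr 1
  simp only [eCount_cons_eq_sum hq, sum_mul, ite_mul, zero_mul,
    sum_comm (s := Ico _ _) (t := range w₁.length)]
  rw [sum_comm]
  simp only [straddleCount, sum_ite_irrel, sum_const_zero]

theorem sum_ite_take_eq_drop_eq_sum_eCount (q : List α) (Q : List (List α)) (w₁ w₂ : List α) :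
    (∑ i ∈ range w₁.length, ∑ k ∈ Ico 1 q.length,
        if q.take k = w₁.drop i then sAnch w₂ (q.drop k) Q else 0) =
      ∑ k ∈ Ico 1 q.length, eCount w₁ [] (q.take k) * sAnch w₂ (q.drop k) Q := by
  rw [sum_comm]
  refine sum_congr rfl fun k hk => ?_
  have htake : q.take k ≠ [] := by
    rw [← List.length_pos_iff, List.length_take_of_le (mem_Ico.mp hk).2.le]
    exact (mem_Ico.mp hk).1
  simp only [eCount_nil_eq_sum htake, sum_mul, ite_mul, one_mul, zero_mul]

theorem gsCount_append_eq_splitCount_add_straddleCount {Q : List (List α)}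
    (hQ : ∀ q ∈ Q, q ≠ []) (w₁ w₂ : List α) :
    gsCount Q (w₁ ++ w₂) = splitCount Q w₁ w₂ + straddleCount Q w₁ w₂ := by
  induction Q generalizing w₁ with
  | nil => simp [splitCount, straddleCount, gsCount_nil]
  | cons q Q ih =>
    obtain ⟨hq, hQ⟩ := List.forall_mem_cons.mp hQ
    have sAnch_drop_append : ∀ i ∈ range w₁.length, sAnch (w₁.drop i ++ w₂) q Q =
        (if q <+: w₁.drop i then splitCount Q ((w₁.drop i).drop q.length) w₂ else 0) +
        (if q <+: w₁.drop i then straddleCount Q ((w₁.drop i).drop q.length) w₂ else 0) +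
        ∑ k ∈ Ico 1 q.length, if q.take k = w₁.drop i then sAnch w₂ (q.drop k) Q else 0 := by
      intro i hi
      have hdrop : w₁.drop i ≠ [] := by simpa using hi
      rw [sAnch_append hdrop, ih hQ, ite_add_zero]
    rw [gsCount_cons_append hq, sum_congr rfl sAnch_drop_append, sum_add_distrib, sum_add_distrib,
      sum_ite_take_eq_drop_eq_sum_eCount, splitCount_cons hq, straddleCount_cons hq]
    ring

end

theorem stmt4_general {α : Type*} [DecidableEq α]
    (Q : List (List α)) (hQ : ∀ q ∈ Q, q ≠ [])
    (w1 w2 : List α) :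
    gsCount Q (w1 ++ w2) =
      (∑ j ∈ Finset.range (Q.length + 1),
          gsCount (Q.take j) w1 * gsCount (Q.drop j) w2)
      + ∑ j ∈ Finset.range Q.length,
          ∑ k ∈ Finset.Ico 1 (Q.getD j []).length,
            eCount w1 (Q.take j) ((Q.getD j []).take k) *
              sAnch w2 ((Q.getD j []).drop k) (Q.drop (j + 1)) :=
  gsCount_append_eq_splitCount_add_straddleCount hQ w1 w2

theorem stmt4 {α : Type*} [Fintype α] [DecidableEq α]
    (Q : List (List α)) (hQ : Q ≠ []) (hQ' : ∀ q ∈ Q, q ≠ [])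
    (w1 w2 : List α) :
    gsCount Q (w1 ++ w2) =
      (∑ j ∈ Finset.range (Q.length + 1),
          gsCount (Q.take j) w1 * gsCount (Q.drop j) w2)
      + ∑ j ∈ Finset.range Q.length,
          ∑ k ∈ Finset.Ico 1 (Q.getD j []).length,
            eCount w1 (Q.take j) ((Q.getD j []).take k) *
              sAnch w2 ((Q.getD j []).drop k) (Q.drop (j + 1)) :=
  stmt4_general Q hQ' w1 w2
end

section
/- Let Q = q_1•⋯•q_n be a generalized subsequence over Σ with total length L = |q_1| + ⋯ + |q_n| ≥ 2. There exist a monoid homomorphism Ξ from (Σ*, concatenation) to the multiplicative monoid of 3(L−1) × 3(L−1) integer matrices, together with row indices r_1 < ⋯ < r_{n+1} and column indices c_1 < ⋯ < c_{n+1} (independent of the word), such that for every word w over Σ, the (n+1)×(n+1) submatrix of Ξ(w) with rows r_1, …, r_{n+1} and columns c_1, …, c_{n+1} is the upper unitriangular matrix M(w) with M(w)_{ii} = 1 for all i, M(w)_{i,j+1} = |w|_{q_i•⋯•q_j} for all 1 ≤ i ≤ j ≤ n, and all entries below the diagonal equal to 0. -/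
/-!
Attach to the factors `q₁, …, qₙ` a linear automaton with states `0, …, L`, in which the edge
`k → k + 1` reads the `k`-th letter of `q₁ ⋯ qₙ`, counted from `0`, and every state lying between
two factors (or at either end) carries a loop reading any letter. A path labelled `w` between two
looping states may wait only between factors, so it has to read each factor in one go: the paths
from the start of `qᵢ` to the end of `qⱼ` are exactly the occurrences of `qᵢ • ⋯ • qⱼ` in `w`. The
product of the letter transition matrices counts paths, and its submatrix on the looping states is
`M(w)`. There are `L + 1` states, and `L + 1 ≤ 3 (L - 1)` for `L ≥ 2`.
-/

theorem mul_apply_self_of_isUpperTriangular {R : Type*} [NonUnitalNonAssocSemiring R]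
    {n : Type*} [Fintype n] [LinearOrder n]
    {A B : Matrix n n R} (hA : A.IsUpperTriangular) (hB : B.IsUpperTriangular) (x : n) :
    (A * B) x x = A x x * B x x := by
  rw [Matrix.mul_apply]
  refine Finset.sum_eq_single_of_mem x (Finset.mem_univ x) fun z _ hz => ?_
  rcases hz.lt_or_gt with hzx | hxz
  · rw [hA hzx, zero_mul]
  · rw [hB hxz, mul_zero]

section GeneralizedSubsequenceCount

variable {α : Type*} [DecidableEq α]

theorem gsCount_cons_nil {q : List α} (hq : q ≠ []) (Q : List (List α)) :
    gsCount (q :: Q) [] = 0 := by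
  have hlen : 0 < q.length := List.length_pos_iff.2 hq
  simp [gsCount, Nat.sub_eq_zero_of_le hlen]

theorem gsCount_cons_cons (q : List α) (Q : List (List α)) (a : α) (w : List α) :
    gsCount (q :: Q) (a :: w) = gsCount (q :: Q) w +
      if (a :: w).take q.length = q then gsCount Q ((a :: w).drop q.length) else 0 := by
  by_cases hlen : q.length ≤ w.length + 1
  · have hrange : (a :: w).length + 1 - q.length = (w.length + 1 - q.length) + 1 := by
      rw [List.length_cons]; omega
    have hshift (i : ℕ) : i + 1 + q.length = i + q.length + 1 := Nat.add_right_comm ..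
    simp only [gsCount, hrange, Finset.sum_range_succ', hshift, List.drop_succ_cons,
      List.drop_zero, Nat.zero_add]
  · have htake : (a :: w).take q.length ≠ q := fun h => by
      have := congrArg List.length h
      rw [List.length_take, List.length_cons] at this
      omega
    have hw : w.length + 1 - q.length = 0 := by omega
    have haw : (a :: w).length + 1 - q.length = 0 := by rw [List.length_cons]; omega
    simp only [gsCount, hw, haw, if_neg htake, Finset.range_zero, Finset.sum_empty, add_zero]

end GeneralizedSubsequenceCount

section MarkedWord

variable {α : Type*}

/-- The letters of a factor, each paired with a flag telling whether it is the first one. -/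
def markedFactor : List α → List (Bool × α)
  | [] => []
  | a :: s => (true, a) :: s.map (Prod.mk false)

/-- The concatenation of a sequence of factors with the first letter of each factor flagged. It
encodes the linear automaton of the sequence: state `k` has an outgoing edge reading the `k`-th
letter, and it carries a loop reading any letter if that letter is flagged or if `k` is the final
state. -/
def markedWord (Q : List (List α)) : List (Bool × α) :=
  Q.flatMap markedFactor

@[simp]
theorem length_markedFactor (q : List α) : (markedFactor q).length = q.length := by
  cases q <;> simp [markedFactor]

theorem length_markedWord (Q : List (List α)) :
    (markedWord Q).length = (Q.map List.length).sum := by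
  simp [markedWord, List.length_flatMap]

theorem markedWord_append (P Q : List (List α)) :
    markedWord (P ++ Q) = markedWord P ++ markedWord Q :=
  List.flatMap_append

theorem all_fst_head?_markedWord {Q : List (List α)} (hQ : ∀ q ∈ Q, q ≠ []) :
    (markedWord Q).head?.all Prod.fst := by
  match Q, hQ with
  | [], _ => rfl
  | [] :: _, hQ => exact absurd rfl (hQ [] List.mem_cons_self)
  | (_ :: _) :: _, _ => rfl

theorem strictMono_length_markedWord_take {Q : List (List α)} (hQ : ∀ q ∈ Q, q ≠ []) :
    StrictMono fun i : Fin (Q.length + 1) => (markedWord (Q.take i)).length := by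
  refine Fin.strictMono_iff_lt_succ.2 fun i => ?_
  have hpos : 0 < Q[i].length := List.length_pos_iff.2 (hQ _ (List.getElem_mem i.isLt))
  simp only [Fin.val_castSucc, Fin.val_succ, length_markedWord,
    List.take_succ_eq_append_getElem i.isLt, List.map_append, List.sum_append, List.map_singleton,
    List.sum_singleton]
  exact Nat.lt_add_of_pos_right hpos

theorem length_markedWord_take_le (Q : List (List α)) (i : ℕ) :
    (markedWord (Q.take i)).length ≤ (markedWord Q).length := by
  conv_rhs => rw [← List.take_append_drop i Q, markedWord_append, List.length_append]
  exact Nat.le_add_right _ _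

end MarkedWord

section PathCount

variable {α : Type*} [DecidableEq α]

/-- The number of paths labelled by the second argument that read the whole marked word from its
initial state to a final state carrying a loop. -/
def pathCount : List (Bool × α) → List α → ℕ
  | [], _ => 1
  | _ :: _, [] => 0
  | (b, c) :: p, a :: w =>
      (if b then pathCount ((b, c) :: p) w else 0) + (if c = a then pathCount p w else 0)

@[simp]
theorem pathCount_nil_left (w : List α) : pathCount [] w = 1 := by
  simp [pathCount]

theorem pathCount_map_mk_false_append (s : List α) (p : List (Bool × α)) (w : List α) :
    pathCount (s.map (Prod.mk false) ++ p) w =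
      if w.take s.length = s then pathCount p (w.drop s.length) else 0 := by
  induction s generalizing w with
  | nil => simp
  | cons c s ih =>
    cases w with
    | nil => simp [pathCount]
    | cons a w =>
      by_cases hca : c = a
      · simp [pathCount, ih, hca]
      · simp [pathCount, hca, Ne.symm hca]

theorem pathCount_markedFactor_append_cons {q : List α} (hq : q ≠ []) (p : List (Bool × α))
    (a : α) (w : List α) :
    pathCount (markedFactor q ++ p) (a :: w) = pathCount (markedFactor q ++ p) w +
      if (a :: w).take q.length = q then pathCount p ((a :: w).drop q.length) else 0 := by
  obtain ⟨c, s, rfl⟩ := List.exists_cons_of_ne_nil hq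
  by_cases hca : c = a
  · simp [markedFactor, pathCount, pathCount_map_mk_false_append, hca]
  · simp [markedFactor, pathCount, hca, Ne.symm hca]

theorem pathCount_markedWord {Q : List (List α)} (hQ : ∀ q ∈ Q, q ≠ []) (w : List α) :
    pathCount (markedWord Q) w = gsCount Q w := by
  induction Q generalizing w with
  | nil => simp [markedWord, gsCount]
  | cons q Q ih =>
    obtain ⟨hq, hQ⟩ := List.forall_mem_cons.1 hQ
    have hcons : markedWord (q :: Q) = markedFactor q ++ markedWord Q := List.flatMap_cons
    induction w with
    | nil =>
      obtain ⟨c, s, rfl⟩ := List.exists_cons_of_ne_nil hq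
      rw [gsCount_cons_nil hq, hcons, markedFactor, List.cons_append, pathCount]
    | cons a w ihw =>
      rw [hcons] at ihw ⊢
      rw [pathCount_markedFactor_append_cons hq, gsCount_cons_cons, ihw, ih hQ]

end PathCount

section TransitionMatrix

variable (R : Type*) [Semiring R] {α : Type*} [DecidableEq α] {N : ℕ}

/-- The adjacency matrix of the transitions that read the letter `a` in the automaton encoded by
the marked word `e`, extended to `N` states. The extra states, like the final one, have only a loop,
because `e[k]?` is `none` there. -/
def transitionMatrix (e : List (Bool × α)) (N : ℕ) (a : α) : Matrix (Fin N) (Fin N) R :=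
  Matrix.of fun x y =>
    (if x = y then if e[(x : ℕ)]?.all Prod.fst then 1 else 0 else 0) +
      (if (x : ℕ) + 1 = y then if e[(x : ℕ)]?.map Prod.snd = some a then 1 else 0 else 0)

theorem transitionMatrix_isUpperTriangular (e : List (Bool × α)) (a : α) :
    (transitionMatrix R e N a).IsUpperTriangular := by
  intro x y hyx
  have hyx : (y : ℕ) < x := hyx
  have hne : x ≠ y := by rintro rfl; omega
  have hsucc : (x : ℕ) + 1 ≠ y := by omega
  rw [transitionMatrix, Matrix.of_apply, if_neg hne, if_neg hsucc, add_zero]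

theorem transitionMatrix_apply_self {e : List (Bool × α)} {x : Fin N}
    (hx : e[(x : ℕ)]?.all Prod.fst) (a : α) : transitionMatrix R e N a x x = 1 := by
  simp [transitionMatrix, hx]

theorem transitionMatrix_mul_apply (e : List (Bool × α)) (a : α) {x x' : Fin N}
    (hx' : (x' : ℕ) = x + 1) (A : Matrix (Fin N) (Fin N) R) (y : Fin N) :
    (transitionMatrix R e N a * A) x y =
      (if e[(x : ℕ)]?.all Prod.fst then A x y else 0) +
        (if e[(x : ℕ)]?.map Prod.snd = some a then A x' y else 0) := by
  simp only [transitionMatrix, Matrix.mul_apply, Matrix.of_apply, ← hx', ← Fin.ext_iff, add_mul,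
    ite_mul, one_mul, zero_mul, Finset.sum_add_distrib, Finset.sum_ite_eq, Finset.mem_univ,
    if_true]

theorem prod_transitionMatrix_isUpperTriangular (e : List (Bool × α)) (w : List α) :
    (w.map (transitionMatrix R e N)).prod.IsUpperTriangular := by
  refine list_prod_mem (S := Matrix.blockTriangularSubsemiring R id) fun A hA => ?_
  obtain ⟨a, -, rfl⟩ := List.mem_map.1 hA
  exact transitionMatrix_isUpperTriangular R e a

theorem prod_transitionMatrix_apply_self {e : List (Bool × α)} {x : Fin N}
    (hx : e[(x : ℕ)]?.all Prod.fst) (w : List α) :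
    (w.map (transitionMatrix R e N)).prod x x = 1 := by
  induction w with
  | nil => simp
  | cons a w ih =>
    rw [List.map_cons, List.prod_cons, mul_apply_self_of_isUpperTriangular
      (transitionMatrix_isUpperTriangular R e a) (prod_transitionMatrix_isUpperTriangular R e w),
      transitionMatrix_apply_self R hx, ih, one_mul]

theorem prod_transitionMatrix_apply_eq_pathCount (p q : List (Bool × α)) {r : List (Bool × α)}
    (hr : r.head?.all Prod.fst) (w : List α) {x y : Fin N} (hx : (x : ℕ) = p.length)
    (hy : (y : ℕ) = p.length + q.length) :
    (w.map (transitionMatrix R (p ++ q ++ r) N)).prod x y = pathCount q w := by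
  induction w generalizing p q x with
  | nil =>
    cases q with
    | nil =>
      obtain rfl : x = y := Fin.ext (by simpa [hx] using hy.symm)
      simp
    | cons t q =>
      have hxy : x ≠ y := by rintro rfl; simp [hx] at hy
      simp [pathCount, hxy]
  | cons a w ih =>
    cases q with
    | nil =>
      obtain rfl : x = y := Fin.ext (by simpa [hx] using hy.symm)
      have hloop : (p ++ [] ++ r)[(x : ℕ)]?.all Prod.fst := by
        rw [List.append_nil, hx, List.getElem?_append_right le_rfl, Nat.sub_self,
          ← List.head?_eq_getElem?]
        exact hr
      rw [prod_transitionMatrix_apply_self R hloop, pathCount_nil_left, Nat.cast_one]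
    | cons t q =>
      obtain ⟨b, c⟩ := t
      have hlt : (x : ℕ) + 1 < N := by
        have := y.isLt
        rw [List.length_cons] at hy
        omega
      have hget : (p ++ (b, c) :: q ++ r)[(x : ℕ)]? = some (b, c) := by simp [hx]
      have hstay := ih p ((b, c) :: q) hx hy
      have hstep := ih (p ++ [(b, c)]) q (x := ⟨x + 1, hlt⟩) (by simp [hx])
        (by simp [hy]; omega)
      rw [List.append_assoc p, List.singleton_append] at hstep
      rw [List.map_cons, List.prod_cons, transitionMatrix_mul_apply R _ a (x' := ⟨x + 1, hlt⟩) rfl,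
        hstay, hstep, hget, pathCount]
      simp

theorem prod_transitionMatrix_markedWord_apply {Q : List (List α)} (hQ : ∀ q ∈ Q, q ≠ [])
    {i j : ℕ} (hij : i ≤ j) (w : List α) {x y : Fin N}
    (hx : (x : ℕ) = (markedWord (Q.take i)).length)
    (hy : (y : ℕ) = (markedWord (Q.take j)).length) :
    (w.map (transitionMatrix R (markedWord Q) N)).prod x y =
      gsCount ((Q.drop i).take (j - i)) w := by
  have htake : Q.take j = Q.take i ++ (Q.drop i).take (j - i) := by
    rw [← List.take_add, Nat.add_sub_cancel' hij]
  have hsplit : markedWord Q = markedWord (Q.take i) ++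
      markedWord ((Q.drop i).take (j - i)) ++ markedWord (Q.drop j) := by
    rw [← markedWord_append, ← htake, ← markedWord_append, List.take_append_drop]
  have hlast : (markedWord (Q.drop j)).head?.all Prod.fst :=
    all_fst_head?_markedWord fun q hq => hQ q (List.mem_of_mem_drop hq)
  rw [htake, markedWord_append, List.length_append] at hy
  rw [hsplit, prod_transitionMatrix_apply_eq_pathCount R _ _ hlast w hx hy,
    pathCount_markedWord fun q hq => hQ q (List.mem_of_mem_drop (List.mem_of_mem_take hq))]

end TransitionMatrix

theorem stmt5_general (R : Type*) [Semiring R] {α : Type*} [DecidableEq α]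
    (Q : List (List α)) (hQ : ∀ q ∈ Q, q ≠ []) {N : ℕ} (hN : (Q.map List.length).sum < N) :
    ∃ (Ξ : List α → Matrix (Fin N) (Fin N) R) (r : Fin (Q.length + 1) → Fin N),
      (∀ w₁ w₂ : List α, Ξ (w₁ ++ w₂) = Ξ w₁ * Ξ w₂) ∧ Ξ [] = 1 ∧ StrictMono r ∧
      ∀ (w : List α) (i j : Fin (Q.length + 1)),
        Ξ w (r i) (r j) =
          if i = j then 1
          else if i < j then (gsCount ((Q.drop (i : ℕ)).take ((j : ℕ) - (i : ℕ))) w : R)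
          else 0 := by
  have hlt (i : Fin (Q.length + 1)) : (markedWord (Q.take i)).length < N :=
    (length_markedWord_take_le Q i).trans_lt (length_markedWord Q ▸ hN)
  let r (i : Fin (Q.length + 1)) : Fin N := ⟨(markedWord (Q.take i)).length, hlt i⟩
  have hr : StrictMono r := strictMono_length_markedWord_take hQ
  refine ⟨fun w => (w.map (transitionMatrix R (markedWord Q) N)).prod, r,
    fun w₁ w₂ => by simp only [List.map_append, List.prod_append], rfl, hr, fun w i j => ?_⟩
  rcases lt_trichotomy i j with hij | rfl | hji
  · rw [if_neg hij.ne, if_pos hij]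
    exact prod_transitionMatrix_markedWord_apply R hQ hij.le w rfl rfl
  · simpa [gsCount] using prod_transitionMatrix_markedWord_apply R hQ (le_refl (i : ℕ)) w
      (x := r i) (y := r i) rfl rfl
  · rw [if_neg hji.ne', if_neg hji.not_gt]
    exact prod_transitionMatrix_isUpperTriangular R (markedWord Q) w (hr hji)

theorem stmt5 {α : Type*} [Fintype α] [DecidableEq α]
    (Q : List (List α)) (hQ : Q ≠ []) (hQ' : ∀ q ∈ Q, q ≠ [])
    (hL : 2 ≤ (Q.map List.length).sum) :
    ∃ (Ξ : List α →
          Matrix (Fin (3 * ((Q.map List.length).sum - 1)))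
                 (Fin (3 * ((Q.map List.length).sum - 1))) ℤ)
      (r c : Fin (Q.length + 1) → Fin (3 * ((Q.map List.length).sum - 1))),
      (∀ w1 w2 : List α, Ξ (w1 ++ w2) = Ξ w1 * Ξ w2) ∧ Ξ [] = 1 ∧
      StrictMono r ∧ StrictMono c ∧
      ∀ (w : List α) (i j : Fin (Q.length + 1)),
        Ξ w (r i) (c j) =
          if i = j then 1
          else if i < j then (gsCount ((Q.drop (i : ℕ)).take ((j : ℕ) - (i : ℕ))) w : ℤ)
          else 0 := by
  have hlt : (Q.map List.length).sum < 3 * ((Q.map List.length).sum - 1) := by omega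
  obtain ⟨Ξ, r, hmul, hone, hr, hΞ⟩ := stmt5_general ℤ Q hQ' hlt
  exact ⟨Ξ, r, r, hmul, hone, hr, hr, hΞ⟩
end

section
/- Let Q = q_1•⋯•q_n be a generalized subsequence over Σ and let w be a word over Σ. Then there exists a word w' over an n-letter alphabet {a_1, …, a_n} such that for all 1 ≤ i ≤ j ≤ n, the scattered-subword count C(w', a_i a_{i+1} ⋯ a_j) equals |w|_{q_i•⋯•q_j}, the number of occurrences of q_i•⋯•q_j as a generalized subsequence of w. -/
/-! Give the occurrence of the factor `q_k` at position `p` of `w` the weight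
`p + |q_k| + |q_{k+1}| + ⋯ + |q_n|`. An occurrence of `q_{k+1}` at `p'` may follow it, that is
`p + |q_k| ≤ p'`, exactly when its weight is at least as large. So sort all occurrences of all
factors by weight, breaking ties by the index of the factor, and let `w'` be the word of indices
read off in this order: the scattered occurrences of `a_i ⋯ a_j` in `w'` are then the occurrences
of `q_i•⋯•q_j` in `w`. -/

section LabelWord

variable {ι β : Type*} [LinearOrder ι]

/-- The word spelled by the labels `f x` of the elements `x` of the finite set `s`, read in
increasing order of `x`. -/
def labelWord (s : Finset ι) (f : ι → β) : List β :=
  s.sort.map f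

theorem labelWord_insert_of_forall_lt {a : ι} {s : Finset ι} (ha : ∀ x ∈ s, a < x) (f : ι → β) :
    labelWord (insert a s) f = f a :: labelWord s f := by
  rw [labelWord, Finset.sort_insert _ (fun x hx => (ha x hx).le) fun h => (ha a h).false,
    List.map_cons, labelWord]

variable [DecidableEq β]

theorem sCount_nil_right (w : List β) : sCount w [] = 1 := by
  cases w <;> rfl

theorem sCount_labelWord_cons (s : Finset ι) (f : ι → β) (b : β) (u : List β) :
    sCount (labelWord s f) (b :: u) =
      ∑ x ∈ s with f x = b, sCount (labelWord {y ∈ s | x < y} f) u := by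
  induction s using Finset.induction_on_min with
  | empty => simp [labelWord, sCount]
  | insert a s ha ih =>
    have ha' : a ∉ s := fun h => (ha a h).false
    have above_min : {y ∈ insert a s | a < y} = s := by
      rw [Finset.filter_insert, if_neg (lt_irrefl a), Finset.filter_true_of_mem ha]
    have above_of_mem : ∀ x ∈ s, {y ∈ insert a s | x < y} = {y ∈ s | x < y} := fun x hx => by
      rw [Finset.filter_insert, if_neg (ha x hx).not_gt]
    rw [labelWord_insert_of_forall_lt ha, sCount, ih, Finset.sum_filter, Finset.sum_filter,
      Finset.sum_insert ha', above_min, add_comm]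
    congr 1
    exact Finset.sum_congr rfl fun x hx => by rw [above_of_mem x hx]

end LabelWord

section FactorPositions

variable {α : Type*} [DecidableEq α]

/-- The (0-based) positions at which `q` occurs as a factor of `w`. The empty word occurs at all
of the positions `0, …, |w|`. -/
def factorPositions (q w : List α) : Finset ℕ :=
  {p ∈ Finset.range (w.length + 1) | q <+: w.drop p}

theorem mem_factorPositions {q w : List α} {p : ℕ} :
    p ∈ factorPositions q w ↔ p ≤ w.length ∧ q <+: w.drop p := by
  simp [factorPositions]

theorem add_length_le_of_mem_factorPositions {q w : List α} {p : ℕ}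
    (hp : p ∈ factorPositions q w) : p + q.length ≤ w.length := by
  obtain ⟨hpw, hq⟩ := mem_factorPositions.mp hp
  have := hq.length_le
  rw [List.length_drop] at this
  omega

theorem map_add_factorPositions_drop (q : List α) {w : List α} {s : ℕ} (hs : s ≤ w.length) :
    (factorPositions q (w.drop s)).map (addLeftEmbedding s) =
      {p ∈ factorPositions q w | s ≤ p} := by
  ext p
  simp only [Finset.mem_map, Finset.mem_filter, mem_factorPositions, List.length_drop,
    List.drop_drop, addLeftEmbedding_apply]
  constructor
  · rintro ⟨r, ⟨hr, hq⟩, rfl⟩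
    exact ⟨⟨by omega, hq⟩, by omega⟩
  · rintro ⟨⟨hp, hq⟩, hsp⟩
    obtain ⟨r, rfl⟩ := Nat.exists_eq_add_of_le hsp
    exact ⟨r, ⟨by omega, hq⟩, rfl⟩

theorem gsCount_cons (q : List α) (Q : List (List α)) (w : List α) :
    gsCount (q :: Q) w = ∑ p ∈ factorPositions q w, gsCount Q (w.drop (p + q.length)) := by
  have positions_eq : factorPositions q w =
      {p ∈ Finset.range (w.length + 1 - q.length) | (w.drop p).take q.length = q} := by
    ext p
    rw [Finset.mem_filter, Finset.mem_range, eq_comm (b := q), ← List.prefix_iff_eq_take]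
    constructor
    · intro hp
      have := add_length_le_of_mem_factorPositions hp
      exact ⟨by omega, (mem_factorPositions.mp hp).2⟩
    · rintro ⟨hp, hq⟩
      exact mem_factorPositions.mpr ⟨by omega, hq⟩
  rw [gsCount, positions_eq, Finset.sum_filter]

theorem gsCount_cons_drop (q : List α) (Q : List (List α)) {w : List α} {s : ℕ}
    (hs : s ≤ w.length) :
    gsCount (q :: Q) (w.drop s) =
      ∑ p ∈ factorPositions q w with s ≤ p, gsCount Q (w.drop (p + q.length)) := by
  rw [gsCount_cons, ← map_add_factorPositions_drop q hs, Finset.sum_map]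
  simp only [List.drop_drop, addLeftEmbedding_apply, add_assoc]

end FactorPositions

section FactorEvents

variable {α : Type*} (Q : List (List α))

/-- The occurrence of the factor `Q.get k` at position `p`, encoded for sorting as its weight
(`p` plus the total length of the factors from `k` on) followed by its index `k`. -/
def factorEvent (k : Fin Q.length) (p : ℕ) : ℕ ×ₗ Fin Q.length :=
  toLex (p + (Q.drop k).flatten.length, k)

theorem factorEvent_injective (k : Fin Q.length) : Function.Injective (factorEvent Q k) := by
  intro p p' h
  simpa [factorEvent] using h

theorem factorEvent_lt_factorEvent_iff {k l : Fin Q.length} (hkl : (k : ℕ) + 1 = l) (p p' : ℕ) :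
    factorEvent Q k p < factorEvent Q l p' ↔ p + (Q.get k).length ≤ p' := by
  have hk : (Q.drop k).flatten.length = (Q.get k).length + (Q.drop l).flatten.length := by
    rw [List.drop_eq_getElem_cons k.isLt, List.flatten_cons, List.length_append, hkl,
      List.get_eq_getElem]
  rw [factorEvent, factorEvent, Prod.Lex.toLex_lt_toLex, hk, Fin.lt_def]
  dsimp only
  omega

variable [DecidableEq α]

/-- The occurrences in `w` of all the factors of `Q`. -/
def factorEvents (w : List α) : Finset (ℕ ×ₗ Fin Q.length) :=
  Finset.univ.biUnion fun k => (factorPositions (Q.get k) w).image (factorEvent Q k)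

/-- The word over the indices of the factors of `Q` which lists, in the order of `factorEvent`,
the occurrences of the factors in `w` that lie in `U`. The theorem needs only `U = Set.univ`; the
recursion over the factors passes to the occurrences above a given one. -/
def factorWord (w : List α) (U : Set (ℕ ×ₗ Fin Q.length)) [DecidablePred (· ∈ U)] :
    List (Fin Q.length) :=
  labelWord {x ∈ factorEvents Q w | x ∈ U} fun x => (ofLex x).2

theorem filter_factorEvents_eq_image (w : List α) (k : Fin Q.length) :
    {x ∈ factorEvents Q w | (ofLex x).2 = k} =
      (factorPositions (Q.get k) w).image (factorEvent Q k) := by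
  ext x
  simp only [factorEvents, Finset.mem_filter, Finset.mem_biUnion, Finset.mem_univ, true_and,
    Finset.mem_image]
  constructor
  · rintro ⟨⟨l, p, hp, rfl⟩, rfl⟩
    exact ⟨p, hp, rfl⟩
  · rintro ⟨p, hp, rfl⟩
    exact ⟨⟨k, p, hp, rfl⟩, rfl⟩

theorem sCount_factorWord_cons (w : List α) {U : Set (ℕ ×ₗ Fin Q.length)}
    [DecidablePred (· ∈ U)] (hU : IsUpperSet U) (k : Fin Q.length) (u : List (Fin Q.length)) :
    sCount (factorWord Q w U) (k :: u) =
      ∑ p ∈ factorPositions (Q.get k) w with factorEvent Q k p ∈ U,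
        sCount (factorWord Q w (Set.Ioi (factorEvent Q k p))) u := by
  rw [factorWord, sCount_labelWord_cons, Finset.filter_comm, filter_factorEvents_eq_image,
    Finset.filter_image, Finset.sum_image (factorEvent_injective Q k).injOn]
  refine Finset.sum_congr rfl fun p hp => ?_
  have hpU : factorEvent Q k p ∈ U := (Finset.mem_filter.mp hp).2
  have above_eq : {y ∈ {x ∈ factorEvents Q w | x ∈ U} | factorEvent Q k p < y} =
      {x ∈ factorEvents Q w | x ∈ Set.Ioi (factorEvent Q k p)} := by
    rw [Finset.filter_filter]
    exact Finset.filter_congr fun y _ => and_iff_right_of_imp fun hy => hU hy.le hpU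
  rw [above_eq, factorWord]

theorem sCount_factorWord (w : List α) {U : Set (ℕ ×ₗ Fin Q.length)}
    [DecidablePred (· ∈ U)] (hU : IsUpperSet U) {k : Fin Q.length} {u : List (Fin Q.length)}
    (hu : List.IsChain (fun a b : Fin Q.length => (a : ℕ) + 1 = b) (k :: u))
    {s : ℕ} (hs : s ≤ w.length) (hkU : ∀ p, factorEvent Q k p ∈ U ↔ s ≤ p) :
    sCount (factorWord Q w U) (k :: u) = gsCount ((k :: u).map Q.get) (w.drop s) := by
  induction u generalizing k U s with
  | nil =>
    simp only [sCount_factorWord_cons Q w hU, hkU, List.map_cons, List.map_nil,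
      gsCount_cons_drop _ _ hs, sCount_nil_right, gsCount]
  | cons l u ih =>
    obtain ⟨hkl, hlu⟩ := List.isChain_cons_cons.mp hu
    rw [sCount_factorWord_cons Q w hU, List.map_cons, gsCount_cons_drop _ _ hs]
    simp only [hkU]
    refine Finset.sum_congr rfl fun p hp => ?_
    have hp' : p ∈ factorPositions (Q.get k) w := (Finset.mem_filter.mp hp).1
    exact ih (isUpperSet_Ioi _) hlu (add_length_le_of_mem_factorPositions hp')
      (factorEvent_lt_factorEvent_iff Q hkl p)

theorem sCount_factorWord_univ (w : List α) {u : List (Fin Q.length)}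
    (hu : List.IsChain (fun a b : Fin Q.length => (a : ℕ) + 1 = b) u) :
    sCount (factorWord Q w Set.univ) u = gsCount (u.map Q.get) w := by
  cases u with
  | nil => rw [sCount_nil_right, List.map_nil, gsCount]
  | cons k u => exact sCount_factorWord Q w isUpperSet_univ hu (Nat.zero_le _) (by simp)

end FactorEvents

theorem filter_finRange_eq_take_drop {n : ℕ} (i j : Fin n) :
    ((List.finRange n).filter fun t => i ≤ t ∧ t ≤ j) =
      ((List.finRange n).drop i).take ((j : ℕ) + 1 - i) := by
  have sublist_finRange : (((List.finRange n).drop i).take ((j : ℕ) + 1 - i)).Sublist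
      (List.finRange n) := (List.take_sublist _ _).trans (List.drop_sublist _ _)
  refine List.Pairwise.eq_of_mem_iff (r := (· < ·))
    (List.Pairwise.filter _ (List.sortedLT_finRange n).pairwise)
    (List.Pairwise.sublist sublist_finRange (List.sortedLT_finRange n).pairwise) fun t => ?_
  simp only [List.mem_filter, List.mem_finRange, true_and, decide_eq_true_eq,
    List.mem_take_iff_getElem, List.getElem_drop, List.getElem_finRange, List.length_drop,
    List.length_finRange, Fin.le_def, Fin.ext_iff, Fin.val_cast]
  constructor
  · rintro ⟨hit, htj⟩
    exact ⟨t - i, by omega, by omega⟩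
  · rintro ⟨m, hm, hmt⟩
    omega

theorem isChain_finRange (n : ℕ) :
    List.IsChain (fun a b : Fin n => (a : ℕ) + 1 = b) (List.finRange n) := by
  simp only [List.isChain_iff_getElem, List.getElem_finRange, Fin.val_cast, implies_true]

theorem stmt7_general {α : Type*} [DecidableEq α] (Q : List (List α)) (w : List α) :
    ∃ w' : List (Fin Q.length),
      ∀ i j : Fin Q.length, i ≤ j →
        sCount w' ((List.finRange Q.length).filter fun t => i ≤ t ∧ t ≤ j) =
          gsCount ((Q.drop (i : ℕ)).take ((j : ℕ) - (i : ℕ) + 1)) w := by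
  refine ⟨factorWord Q w Set.univ, fun i j hij => ?_⟩
  have hlen : (j : ℕ) + 1 - i = (j : ℕ) - i + 1 := Nat.succ_sub hij
  rw [filter_finRange_eq_take_drop, hlen,
    sCount_factorWord_univ Q w (((isChain_finRange _).drop _).take _),
    List.map_take, List.map_drop, List.map_get_finRange]

theorem stmt7 {α : Type*} [Fintype α] [DecidableEq α]
    (Q : List (List α)) (hQ : Q ≠ []) (hQ' : ∀ q ∈ Q, q ≠ [])
    (w : List α) :
    ∃ w' : List (Fin Q.length),
      ∀ i j : Fin Q.length, i ≤ j →
        sCount w' ((List.finRange Q.length).filter fun t => i ≤ t ∧ t ≤ j) =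
          gsCount ((Q.drop (i : ℕ)).take ((j : ℕ) - (i : ℕ) + 1)) w :=
  stmt7_general Q w
end

section
/- Let Σ = {a_1 < a_2 < ⋯ < a_k} be an ordered alphabet and let Ψ: Σ* → M_{k+1}(ℤ) be the Parikh matrix mapping. Then for every word w over Σ, every minor of Ψ(w) — the determinant of any square submatrix obtained by selecting equally many rows and columns of Ψ(w) — is a nonnegative integer. -/
/-!
Left multiplication by the transvection `1 + t E_{p,q}` adds `t` times row `q` to row `p`. A minor
that omits row `p` is unchanged; one that uses row `p` gains, by linearity in that row, `t` times
the minor in which row `p` is replaced by row `q`. If `q` covers `p`, the replacement keeps the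
chosen rows weakly increasing, so the new minor is again a minor of the original matrix or has a
repeated row. Hence for `0 ≤ t` nonnegativity of all minors is preserved, and a Parikh matrix is
obtained from the identity by such multiplications.
-/

theorem submatrix_update_left {m n l o α : Type*} [DecidableEq l] (A : Matrix m n α) (r : l → m)
    (c : o → n) (i : l) (q : m) :
    A.submatrix (Function.update r i q) c = (A.submatrix r c).updateRow i fun j => A q (c j) := by
  ext a b
  rcases eq_or_ne a i with rfl | hai <;> simp [*]

theorem monotone_update_of_covBy {α β : Type*} [PartialOrder α] [DecidableEq α] [LinearOrder β]
    {f : α → β} (hf : StrictMono f) {a : α} {b : β} (hab : f a ⋖ b) :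
    Monotone (Function.update f a b) := by
  refine monotone_iff_forall_lt.2 fun x y hxy => ?_
  rcases eq_or_ne x a with rfl | hx
  · simpa [hxy.ne'] using hab.ge_of_gt (hf hxy)
  · rcases eq_or_ne y a with rfl | hy
    · simpa [hx] using (hf hxy).le.trans hab.le
    · simpa [hx, hy] using (hf hxy).le

theorem eq_of_strictMono_of_range_subset {α β : Type*} [LinearOrder α] [Finite α] [Preorder β]
    {f g : α → β} (hf : StrictMono f) (hg : StrictMono g) (h : Set.range f ⊆ Set.range g) :
    f = g := by
  choose σ hσ using fun a => h (Set.mem_range_self a)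
  have hσ_inj : Function.Injective σ := fun a b hab => hf.injective (by rw [← hσ, hab, hσ])
  have hσ_surj : Function.Surjective σ := Finite.surjective_of_injective hσ_inj
  have hrange : Set.range f = Set.range g := by
    rw [← hσ_surj.range_comp g, show g ∘ σ = f from funext hσ]
  exact (hf.range_inj hg).1 hrange

section Transvection

variable {ι κ l R : Type*} [Fintype ι] [DecidableEq ι] [DecidableEq l] [CommRing R]

theorem submatrix_transvection_mul {o : Type*} (A : Matrix ι κ R) (q : ι) (t : R) {r : l → ι}
    (hr : Function.Injective r) (c : o → κ) (i : l) :
    (Matrix.transvection (r i) q t * A).submatrix r c =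
      (A.submatrix r c).updateRow i (A.submatrix r c i + t • fun j => A q (c j)) := by
  ext a b
  rcases eq_or_ne a i with rfl | hai
  · simp
  · simp [hai, hr.ne hai]

theorem det_submatrix_transvection_mul [Fintype l] (A : Matrix ι κ R) (q : ι) (t : R) {r : l → ι}
    (hr : Function.Injective r) (c : l → κ) (i : l) :
    ((Matrix.transvection (r i) q t * A).submatrix r c).det =
      (A.submatrix r c).det + t * (A.submatrix (Function.update r i q) c).det := by
  rw [submatrix_transvection_mul A q t hr, Matrix.det_updateRow_add, Matrix.det_updateRow_smul,
    Matrix.updateRow_eq_self, submatrix_update_left]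

end Transvection

/-- Total nonnegativity: every minor is nonnegative. A minor is given by strictly increasing
enumerations `r` and `c` of its rows and columns, which fixes its sign. -/
def IsTotallyNonneg {ι κ R : Type*} [Preorder ι] [Preorder κ] [CommRing R] [LE R]
    (A : Matrix ι κ R) : Prop :=
  ∀ ⦃m : ℕ⦄ ⦃r : Fin m → ι⦄ ⦃c : Fin m → κ⦄, StrictMono r → StrictMono c →
    0 ≤ (A.submatrix r c).det

theorem IsTotallyNonneg.det_submatrix_nonneg_of_monotone {ι κ R : Type*} [PartialOrder ι]
    [Preorder κ] [CommRing R] [Preorder R] {A : Matrix ι κ R} (hA : IsTotallyNonneg A) {m : ℕ}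
    {r : Fin m → ι} {c : Fin m → κ} (hr : Monotone r) (hc : StrictMono c) :
    0 ≤ (A.submatrix r c).det := by
  by_cases hinj : Function.Injective r
  · exact hA (hr.strictMono_of_injective hinj) hc
  · obtain ⟨a, b, hab, hne⟩ := Function.not_injective_iff.1 hinj
    refine (Matrix.det_zero_of_row_eq hne ?_).ge
    ext j
    simp only [Matrix.submatrix_apply, hab]

section OrderedRing

variable {R : Type*} [CommRing R] [PartialOrder R] [IsOrderedRing R]

theorem isTotallyNonneg_one {ι : Type*} [Preorder ι] [DecidableEq ι] :
    IsTotallyNonneg (1 : Matrix ι ι R) := by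
  intro m r c hr hc
  by_cases h : Set.range r ⊆ Set.range c
  · obtain rfl := eq_of_strictMono_of_range_subset hr hc h
    simp [Matrix.submatrix_one r hr.injective]
  · obtain ⟨_, ⟨i, rfl⟩, hi⟩ := Set.not_subset.1 h
    refine (Matrix.det_eq_zero_of_row_eq_zero i fun j => ?_).ge
    exact Matrix.one_apply_ne fun hij => hi ⟨j, hij.symm⟩

variable {ι : Type*} [Fintype ι] [LinearOrder ι]

theorem IsTotallyNonneg.transvection_mul {κ : Type*} [Preorder κ] {A : Matrix ι κ R}
    (hA : IsTotallyNonneg A) {p q : ι} (hpq : p ⋖ q) {t : R} (ht : 0 ≤ t) :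
    IsTotallyNonneg (Matrix.transvection p q t * A) := by
  intro m r c hr hc
  by_cases hp : p ∈ Set.range r
  · obtain ⟨i, rfl⟩ := hp
    rw [det_submatrix_transvection_mul A q t hr.injective]
    have hupdate : 0 ≤ (A.submatrix (Function.update r i q) c).det :=
      hA.det_submatrix_nonneg_of_monotone (monotone_update_of_covBy hr hpq) hc
    exact add_nonneg (hA hr hc) (mul_nonneg ht hupdate)
  · have hunchanged : (Matrix.transvection p q t * A).submatrix r c = A.submatrix r c := by
      ext i j
      exact Matrix.transvection_mul_apply_of_ne _ _ _ _ (fun h => hp ⟨i, h⟩) _ _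
    simpa only [hunchanged] using hA hr hc

theorem stmt9_general {α : Type*} (p q : α → ι) (t : α → R) (hpq : ∀ a, p a ⋖ q a)
    (ht : ∀ a, 0 ≤ t a) (Ψ : List α → Matrix ι ι R)
    (hmul : ∀ w₁ w₂ : List α, Ψ (w₁ ++ w₂) = Ψ w₁ * Ψ w₂) (hone : Ψ [] = 1)
    (hletter : ∀ a, Ψ [a] = Matrix.transvection (p a) (q a) (t a)) (w : List α) :
    IsTotallyNonneg (Ψ w) := by
  induction w with
  | nil => simpa only [hone] using isTotallyNonneg_one
  | cons a w ih =>
    have hcons : Ψ (a :: w) = Matrix.transvection (p a) (q a) (t a) * Ψ w := by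
      rw [← hletter, ← hmul, List.singleton_append]
    simpa only [hcons] using ih.transvection_mul (hpq a) (ht a)

end OrderedRing

theorem stmt9 (k : ℕ)
    (Ψ : List (Fin k) → Matrix (Fin (k + 1)) (Fin (k + 1)) ℤ)
    (hmul : ∀ w1 w2 : List (Fin k), Ψ (w1 ++ w2) = Ψ w1 * Ψ w2)
    (hone : Ψ [] = 1)
    (hletter : ∀ q : Fin k, Ψ [q] = 1 + Matrix.single q.castSucc q.succ 1)
    (w : List (Fin k))
    (m : ℕ) (r c : Fin m → Fin (k + 1))
    (hr : StrictMono r) (hc : StrictMono c) :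
    0 ≤ ((Ψ w).submatrix r c).det :=
  stmt9_general Fin.castSucc Fin.succ 1 (fun q => by simp) (fun _ => zero_le_one) Ψ hmul hone
    hletter w hr hc
end

section
/- Let Q_1 and Q_2 be generalized subsequences over Σ. Then there exist finitely many generalized subsequences P_1, …, P_r over Σ and positive integers c_1, …, c_r such that for every word w over Σ: |w|_{Q_1} · |w|_{Q_2} = Σ_{i=1}^{r} c_i · |w|_{P_i}; moreover, each P_i can be chosen with total length (the sum of the lengths of its factors) at most the total length of Q_1 plus the total length of Q_2. -/
/-!
Reading a generalized subsequence letter by letter, each letter either has to follow its predecessor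
immediately or may stand anywhere later. On counting functions `f : List α → ℕ` these two ways of
putting a letter `a` in front are the operators `prepend a` (the word starts with `a`, and `f` is
evaluated on the rest) and `scatter a` (sum over all positions of the letter `a`). Comparing the
positions of the two leading letters gives the quasi-shuffle recursion
`scatter a f * scatter b g =
  [a = b] scatter a (f * g) + scatter a (f * scatter b g) + scatter b (scatter a f * g)`
together with similar rules involving `prepend`, so induction on the letters expands every product
of counting functions into counting functions without increasing the number of letters.
-/

namespace GeneralizedSubsequence

theorem exists_fin_sum_of_mem_closure {M : Type*} [AddCommMonoid M] {s : Set M} {x : M}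
    (hx : x ∈ AddSubmonoid.closure s) :
    ∃ (r : ℕ) (g : Fin r → M), (∀ i, g i ∈ s) ∧ ∑ i, g i = x := by
  obtain ⟨l, hl, rfl⟩ := AddSubmonoid.exists_list_of_mem_closure hx
  exact ⟨l.length, fun i => l[i], fun i => hl _ (List.getElem_mem _), Fin.sum_univ_getElem l⟩

@[elab_as_elim]
theorem letter_induction {α : Type*} {motive : (p : List α) → (P : List (List α)) → [] ∉ P → Prop}
    (nil : motive [] [] List.not_mem_nil)
    (prepend : ∀ a p P hP, motive p P hP → motive (a :: p) P hP)
    (scatter : ∀ a p P hP, motive p P hP → motive [] ((a :: p) :: P) (by simpa using hP))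
    (p : List α) (P : List (List α)) (hP : [] ∉ P) : motive p P hP := by
  induction P generalizing p with
  | nil =>
    induction p with
    | nil => exact nil
    | cons a p ih => exact prepend a p [] hP ih
  | cons q P ihP =>
    induction p with
    | nil =>
      rcases q with _ | ⟨a, q⟩
      · simp at hP
      · exact scatter a q P (fun h => hP (List.mem_cons_of_mem _ h)) (ihP q _)
    | cons a p ih => exact prepend a p (q :: P) hP ih

variable {α : Type*} [DecidableEq α]

section Prepend

variable {M : Type*} [AddZeroClass M]

/-- Requires the word to begin with the letter `a` and evaluates `f` on the rest: the effect on
counting functions of lengthening an anchored first factor by `a` on the left. -/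
def prepend (a : α) : (List α → M) →+ (List α → M) where
  toFun f
    | [] => 0
    | b :: w => if b = a then f w else 0
  map_zero' := by
    funext w
    cases w <;> simp
  map_add' f g := by
    funext w
    rcases w with _ | ⟨b, w⟩
    · simp
    · by_cases h : b = a <;> simp [h]

@[simp]
theorem prepend_nil (a : α) (f : List α → M) : prepend a f [] = 0 := rfl

@[simp]
theorem prepend_cons (a : α) (f : List α → M) (b : α) (w : List α) :
    prepend a f (b :: w) = if b = a then f w else 0 := rfl

end Prepend

section Scatter

variable {M : Type*} [AddCommMonoid M]

/-- Sums `f` over the parts of the word that follow an occurrence of the letter `a`: the effect on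
counting functions of putting `a` on the left of an anchored first factor and letting the resulting
factor start anywhere. -/
def scatter (a : α) : (List α → M) →+ (List α → M) where
  toFun f w := (w.tails.map (prepend a f)).sum
  map_zero' := by
    funext w
    exact List.sum_eq_zero (by simp)
  map_add' f g := by
    funext w
    rw [map_add]
    exact List.sum_map_add

@[simp]
theorem scatter_nil (a : α) (f : List α → M) : scatter a f [] = 0 := by
  simp [scatter]

@[simp]
theorem scatter_cons (a : α) (f : List α → M) (b : α) (w : List α) :
    scatter a f (b :: w) = prepend a f (b :: w) + scatter a f w := by
  simp [scatter]

end Scatter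

section QuasiShuffle

variable {R : Type*} [NonUnitalNonAssocSemiring R]

theorem prepend_mul_prepend (a b : α) (f g : List α → R) :
    prepend a f * prepend b g = if a = b then prepend a (f * g) else 0 := by
  funext w
  rcases w with _ | ⟨c, w⟩
  · split_ifs <;> simp
  · by_cases hab : a = b <;> by_cases hca : c = a <;> simp_all

theorem prepend_mul_scatter (a b : α) (f g : List α → R) :
    prepend a f * scatter b g =
      (if a = b then prepend a (f * g) else 0) + prepend a (f * scatter b g) := by
  rw [← prepend_mul_prepend]
  funext w
  rcases w with _ | ⟨c, w⟩
  · simp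
  · by_cases hca : c = a <;> simp [hca, mul_add]

theorem scatter_mul_scatter (a b : α) (f g : List α → R) :
    scatter a f * scatter b g =
      (if a = b then scatter a (f * g) else 0) + scatter a (f * scatter b g) +
        scatter b (scatter a f * g) := by
  funext w
  induction w with
  | nil => split_ifs <;> simp
  | cons c w ih =>
    have hprod : prepend a f (c :: w) * prepend b g (c :: w) =
        (if a = b then prepend a (f * g) else 0 : List α → R) (c :: w) :=
      congrFun (prepend_mul_prepend a b f g) (c :: w)
    have hleft : prepend a f (c :: w) * scatter b g w = prepend a (f * scatter b g) (c :: w) := by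
      simp
    have hright : scatter a f w * prepend b g (c :: w) = prepend b (scatter a f * g) (c :: w) := by
      simp
    simp only [Pi.mul_apply, Pi.add_apply] at ih
    simp only [Pi.mul_apply, Pi.add_apply, scatter_cons, add_mul, mul_add, hprod, hleft, hright, ih]
    split_ifs
    · rw [scatter_cons]
      abel
    · simp only [Pi.zero_apply]
      abel

end QuasiShuffle

/-- Number of occurrences in `w` of the factor `p` followed by those of `P` that place `p` at the
very start of `w`. The word `p` may be empty, and then every occurrence of `P` is counted. -/
def anchoredCount (p : List α) (P : List (List α)) (w : List α) : ℕ :=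
  if w.take p.length = p then gsCount P (w.drop p.length) else 0

theorem anchoredCount_nil (P : List (List α)) : anchoredCount [] P = gsCount P := by
  funext w
  simp [anchoredCount]

theorem anchoredCount_cons (a : α) (p : List α) (P : List (List α)) :
    anchoredCount (a :: p) P = prepend a (anchoredCount p P) := by
  funext w
  rcases w with _ | ⟨b, w⟩
  · simp [anchoredCount]
  · by_cases h : b = a <;> simp [anchoredCount, h]

theorem anchoredCount_nil_nil : anchoredCount ([] : List α) [] = 1 := by
  funext w
  simp [anchoredCount, gsCount]

theorem gsCount_cons_apply_cons (q : List α) (Q : List (List α)) (b : α) (w : List α) :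
    gsCount (q :: Q) (b :: w) = anchoredCount q Q (b :: w) + gsCount (q :: Q) w := by
  rcases le_or_gt q.length (w.length + 1) with h | h
  · have hlen : (b :: w).length + 1 - q.length = w.length + 1 - q.length + 1 := by
      simp only [List.length_cons]
      omega
    rw [gsCount, gsCount, hlen, Finset.sum_range_succ', add_comm]
    simp [anchoredCount, Nat.add_right_comm _ 1]
  · have hlen : (b :: w).length + 1 - q.length = 0 := by
      simp only [List.length_cons]
      omega
    have hlen' : w.length + 1 - q.length = 0 := by omega
    have hprefix : (b :: w).take q.length ≠ q := fun hq => by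
      have := List.length_take_le' q.length (b :: w)
      rw [hq, List.length_cons] at this
      omega
    rw [gsCount, gsCount, hlen, hlen', anchoredCount, if_neg hprefix]
    simp

theorem gsCount_cons_cons (a : α) (p : List α) (P : List (List α)) :
    gsCount ((a :: p) :: P) = scatter a (anchoredCount p P) := by
  funext w
  induction w with
  | nil => simp [gsCount]
  | cons b w ih => rw [gsCount_cons_apply_cons, anchoredCount_cons, scatter_cons, ih]

theorem anchoredCount_nil_cons_cons (a : α) (p : List α) (P : List (List α)) :
    anchoredCount [] ((a :: p) :: P) = scatter a (anchoredCount p P) := by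
  rw [anchoredCount_nil, gsCount_cons_cons]

/-- The finite sums of anchored counts with at most `n` letters in total, where all factors except
possibly the anchored one are nonempty. Letters are counted in `p ++ P.flatten` because each of the
two ways of putting a letter in front then increases the size by one definitionally. -/
def anchoredSpan (α : Type*) [DecidableEq α] (n : ℕ) : AddSubmonoid (List α → ℕ) :=
  AddSubmonoid.closure
    {f | ∃ p P, [] ∉ P ∧ (p ++ P.flatten).length ≤ n ∧ anchoredCount p P = f}

/-- The finite sums of the counting functions of generalized subsequences of total length at most
`n`. -/
def gsSpan (α : Type*) [DecidableEq α] (n : ℕ) : AddSubmonoid (List α → ℕ) :=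
  AddSubmonoid.closure {f | ∃ P, P ≠ [] ∧ [] ∉ P ∧ P.flatten.length ≤ n ∧ gsCount P = f}

theorem anchoredCount_mem_anchoredSpan (p : List α) {P : List (List α)} (hP : [] ∉ P) :
    anchoredCount p P ∈ anchoredSpan α (p ++ P.flatten).length :=
  AddSubmonoid.subset_closure ⟨p, P, hP, le_rfl, rfl⟩

theorem anchoredSpan_mono : Monotone (anchoredSpan α) := fun _ _ hmn =>
  AddSubmonoid.closure_mono fun _ ⟨p, P, hP, hn, hf⟩ => ⟨p, P, hP, hn.trans hmn, hf⟩

theorem gsSpan_le_anchoredSpan (n : ℕ) : gsSpan α n ≤ anchoredSpan α n :=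
  AddSubmonoid.closure_mono fun _ ⟨P, _, hP, hn, hf⟩ =>
    ⟨[], P, hP, hn, (anchoredCount_nil P).trans hf⟩

theorem prepend_mem_anchoredSpan (a : α) {n : ℕ} {f : List α → ℕ} (hf : f ∈ anchoredSpan α n) :
    prepend a f ∈ anchoredSpan α (n + 1) := by
  suffices h : anchoredSpan α n ≤ (anchoredSpan α (n + 1)).comap (prepend a) from h hf
  rw [anchoredSpan, AddSubmonoid.closure_le]
  rintro _ ⟨p, P, hP, hn, rfl⟩
  exact AddSubmonoid.subset_closure
    ⟨a :: p, P, hP, Nat.succ_le_succ hn, anchoredCount_cons a p P⟩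

theorem scatter_mem_gsSpan (a : α) {n : ℕ} {f : List α → ℕ} (hf : f ∈ anchoredSpan α n) :
    scatter a f ∈ gsSpan α (n + 1) := by
  suffices h : anchoredSpan α n ≤ (gsSpan α (n + 1)).comap (scatter a) from h hf
  rw [anchoredSpan, AddSubmonoid.closure_le]
  rintro _ ⟨p, P, hP, hn, rfl⟩
  exact AddSubmonoid.subset_closure ⟨(a :: p) :: P, List.cons_ne_nil _ _, by simpa using hP,
    Nat.succ_le_succ hn, gsCount_cons_cons a p P⟩

section ProductMembership

variable (a b : α) {m n : ℕ} {f g : List α → ℕ}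

theorem prepend_mul_prepend_mem (hfg : f * g ∈ anchoredSpan α (m + n)) :
    prepend a f * prepend b g ∈ anchoredSpan α (m + 1 + (n + 1)) := by
  rw [prepend_mul_prepend]
  split_ifs
  exacts [anchoredSpan_mono (by omega) (prepend_mem_anchoredSpan a hfg), zero_mem _]

theorem prepend_mul_scatter_mem (hfg : f * g ∈ anchoredSpan α (m + n))
    (hf : f * scatter b g ∈ anchoredSpan α (m + (n + 1))) :
    prepend a f * scatter b g ∈ anchoredSpan α (m + 1 + (n + 1)) := by
  rw [prepend_mul_scatter, ← prepend_mul_prepend]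
  exact add_mem (prepend_mul_prepend_mem a b hfg)
    (anchoredSpan_mono (by omega) (prepend_mem_anchoredSpan a hf))

theorem scatter_mul_prepend_mem (hfg : f * g ∈ anchoredSpan α (m + n))
    (hg : scatter a f * g ∈ anchoredSpan α (m + 1 + n)) :
    scatter a f * prepend b g ∈ anchoredSpan α (m + 1 + (n + 1)) := by
  rw [mul_comm, add_comm] at hfg hg ⊢
  exact prepend_mul_scatter_mem b a hfg hg

theorem scatter_mul_scatter_mem (hfg : f * g ∈ anchoredSpan α (m + n))
    (hf : f * scatter b g ∈ anchoredSpan α (m + (n + 1)))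
    (hg : scatter a f * g ∈ anchoredSpan α (m + 1 + n)) :
    scatter a f * scatter b g ∈ gsSpan α (m + 1 + (n + 1)) := by
  rw [scatter_mul_scatter]
  refine add_mem (add_mem ?_ ?_) (scatter_mem_gsSpan b hg)
  · split_ifs
    · exact scatter_mem_gsSpan a (anchoredSpan_mono (by omega : m + n ≤ m + 1 + n) hfg)
    · exact zero_mem _
  · have hsize : m + 1 + (n + 1) = m + (n + 1) + 1 := by omega
    rw [hsize]
    exact scatter_mem_gsSpan a hf

end ProductMembership

theorem anchoredCount_mul_anchoredCount_mem (p q : List α) {P Q : List (List α)}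
    (hP : [] ∉ P) (hQ : [] ∉ Q) :
    anchoredCount p P * anchoredCount q Q ∈
      anchoredSpan α ((p ++ P.flatten).length + (q ++ Q.flatten).length) := by
  induction p, P, hP using letter_induction generalizing q Q with
  | nil =>
    rw [anchoredCount_nil_nil, one_mul]
    exact anchoredSpan_mono (Nat.le_add_left _ _) (anchoredCount_mem_anchoredSpan q hQ)
  | prepend a p P hP ihP =>
    induction q, Q, hQ using letter_induction with
    | nil =>
      rw [anchoredCount_nil_nil, mul_one]
      exact anchoredCount_mem_anchoredSpan (a :: p) hP
    | prepend b q Q hQ _ =>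
      rw [anchoredCount_cons, anchoredCount_cons]
      exact prepend_mul_prepend_mem a b (ihP q hQ)
    | scatter b q Q hQ _ =>
      have hf := ihP [] (Q := (b :: q) :: Q) (by simpa using hQ)
      rw [anchoredCount_nil_cons_cons] at hf ⊢
      rw [anchoredCount_cons]
      exact prepend_mul_scatter_mem a b (ihP q hQ) hf
  | scatter a p P hP ihP =>
    induction q, Q, hQ using letter_induction with
    | nil =>
      rw [anchoredCount_nil_nil, mul_one]
      exact anchoredCount_mem_anchoredSpan [] (by simpa using hP)
    | prepend b q Q hQ ihQ =>
      rw [anchoredCount_nil_cons_cons] at ihQ ⊢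
      rw [anchoredCount_cons]
      exact scatter_mul_prepend_mem a b (ihP q hQ) ihQ
    | scatter b q Q hQ ihQ =>
      have hf := ihP [] (Q := (b :: q) :: Q) (by simpa using hQ)
      rw [anchoredCount_nil_cons_cons] at hf ihQ ⊢
      rw [anchoredCount_nil_cons_cons]
      exact gsSpan_le_anchoredSpan _ (scatter_mul_scatter_mem a b (ihP q hQ) hf ihQ)

theorem gsCount_mul_gsCount_mem {P Q : List (List α)} (hP₀ : P ≠ []) (hQ₀ : Q ≠ [])
    (hP : [] ∉ P) (hQ : [] ∉ Q) :
    gsCount P * gsCount Q ∈ gsSpan α (P.flatten.length + Q.flatten.length) := by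
  obtain ⟨_ | ⟨a, p⟩, P, rfl⟩ := List.exists_cons_of_ne_nil hP₀
  · simp at hP
  obtain ⟨_ | ⟨b, q⟩, Q, rfl⟩ := List.exists_cons_of_ne_nil hQ₀
  · simp at hQ
  have hP' : [] ∉ P := fun h => hP (List.mem_cons_of_mem _ h)
  have hQ' : [] ∉ Q := fun h => hQ (List.mem_cons_of_mem _ h)
  have hf := anchoredCount_mul_anchoredCount_mem p [] hP' hQ
  have hg := anchoredCount_mul_anchoredCount_mem [] q hP hQ'
  rw [anchoredCount_nil_cons_cons] at hf hg
  rw [gsCount_cons_cons, gsCount_cons_cons]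
  exact scatter_mul_scatter_mem a b (anchoredCount_mul_anchoredCount_mem p q hP' hQ') hf hg

end GeneralizedSubsequence

theorem stmt12_general {α : Type*} [DecidableEq α]
    (Q1 Q2 : List (List α))
    (h1 : Q1 ≠ []) (h1' : ∀ q ∈ Q1, q ≠ [])
    (h2 : Q2 ≠ []) (h2' : ∀ q ∈ Q2, q ≠ []) :
    ∃ (r : ℕ) (c : Fin r → ℕ) (P : Fin r → List (List α)),
      (∀ i, 0 < c i) ∧
      (∀ i, P i ≠ [] ∧ ∀ q ∈ P i, q ≠ []) ∧
      (∀ i, ((P i).map List.length).sum ≤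
        (Q1.map List.length).sum + (Q2.map List.length).sum) ∧
      ∀ w : List α,
        gsCount Q1 w * gsCount Q2 w = ∑ i, c i * gsCount (P i) w := by
  have hmem := GeneralizedSubsequence.gsCount_mul_gsCount_mem h1 h2
    (fun h => h1' [] h rfl) (fun h => h2' [] h rfl)
  obtain ⟨r, f, hf, hsum⟩ := GeneralizedSubsequence.exists_fin_sum_of_mem_closure hmem
  choose P hP₀ hP hlen hcount using hf
  refine ⟨r, 1, P, fun _ => Nat.one_pos,
    fun i => ⟨hP₀ i, fun q hq h => hP i (h ▸ hq)⟩, fun i => ?_, fun w => ?_⟩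
  · simpa only [List.length_flatten] using hlen i
  · simpa [hcount] using (congrFun hsum w).symm

theorem stmt12 {α : Type*} [Fintype α] [DecidableEq α]
    (Q1 Q2 : List (List α))
    (h1 : Q1 ≠ []) (h1' : ∀ q ∈ Q1, q ≠ [])
    (h2 : Q2 ≠ []) (h2' : ∀ q ∈ Q2, q ≠ []) :
    ∃ (r : ℕ) (c : Fin r → ℕ) (P : Fin r → List (List α)),
      (∀ i, 0 < c i) ∧
      (∀ i, P i ≠ [] ∧ ∀ q ∈ P i, q ≠ []) ∧
      (∀ i, ((P i).map List.length).sum ≤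
        (Q1.map List.length).sum + (Q2.map List.length).sum) ∧
      ∀ w : List α,
        gsCount Q1 w * gsCount Q2 w = ∑ i, c i * gsCount (P i) w := by
  exact stmt12_general Q1 Q2 h1 h1' h2 h2'
end

section
/- Every generalized subword history over Σ is equivalent to a linear one: for every generalized subword history G over Σ there exist an integer r ≥ 0, integers c_1, …, c_r, and generalized subsequences P_1, …, P_r over Σ such that for every word w over Σ, the value of G in w equals Σ_{i=1}^{r} c_i · |w|_{P_i}. -/
/-- Generalized subword histories over the alphabet α: monomials are (factor lists of)
generalized subsequences, combined with negation, addition and multiplication. -/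
inductive GSH (α : Type*) where
  | mono : List (List α) → GSH α
  | neg : GSH α → GSH α
  | add : GSH α → GSH α → GSH α
  | mul : GSH α → GSH α → GSH α

/-- The value of a generalized subword history in a word. -/
def GSH.value {α : Type*} [DecidableEq α] : GSH α → List α → ℤ
  | mono Q, w => gsCount Q w
  | neg G, w => -(G.value w)
  | add G1 G2, w => G1.value w + G2.value w
  | mul G1 G2, w => G1.value w * G2.value w

/-- Well-formedness: every monomial is a genuine generalized subsequence, i.e. a nonempty
sequence of nonempty factors. -/
def GSH.WF {α : Type*} : GSH α → Prop
  | mono Q => Q ≠ [] ∧ ∀ q ∈ Q, q ≠ []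
  | neg G => G.WF
  | add G1 G2 => G1.WF ∧ G2.WF
  | mul G1 G2 => G1.WF ∧ G2.WF

/-!
Reading words from the left, every occurrence function `w ↦ |w|_Q` is obtained from the constant
`1` by two operators: `afterPrefix [a]`, which reads a first letter `a`, and `suffixSum`, which sums
over all suffixes and is only ever applied to functions of the form `afterPrefix [a] f`. A product
of two sums over suffixes splits according to which suffix is longer, so
`suffixSum f * suffixSum g = suffixSum (f * suffixSum g + g * suffixSum f - f * g)`.
Together with the evident rules for reading letters, this reduces a product of two such functions
to products with fewer letters, by the recursion of the quasi-shuffle product.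
-/

namespace GSH

variable {R α : Type*} [CommRing R]

/-- The operator taking a function `f` of words to the sum of `f` over all suffixes of a word, the
word itself and the empty word included. It passes from counting occurrences at the beginning of
a word to counting them anywhere. -/
def suffixSum : (List α → R) →ₗ[R] (List α → R) where
  toFun f w := ∑ i ∈ Finset.range (w.length + 1), f (w.drop i)
  map_add' f g := by ext w; simp [Finset.sum_add_distrib]
  map_smul' c f := by ext w; simp [Finset.mul_sum]

theorem suffixSum_apply (f : List α → R) (w : List α) :
    suffixSum f w = ∑ i ∈ Finset.range (w.length + 1), f (w.drop i) := rfl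

theorem suffixSum_nil (f : List α → R) : suffixSum f [] = f [] := by
  simp [suffixSum_apply]

theorem suffixSum_cons (f : List α → R) (a : α) (w : List α) :
    suffixSum f (a :: w) = f (a :: w) + suffixSum f w := by
  rw [suffixSum_apply, suffixSum_apply, List.length_cons, Finset.sum_range_succ']
  simp [add_comm]

theorem suffixSum_mul_suffixSum (f g : List α → R) :
    suffixSum f * suffixSum g = suffixSum (f * suffixSum g + g * suffixSum f - f * g) := by
  ext w
  induction w with
  | nil => simp only [suffixSum_nil, Pi.add_apply, Pi.sub_apply, Pi.mul_apply]; ring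
  | cons a w ih =>
    simp only [suffixSum_cons, ← ih, Pi.add_apply, Pi.sub_apply, Pi.mul_apply]
    ring

variable [DecidableEq α]

/-- The operator taking a function `f` of words to the function which strips the prefix `q` from
its argument before applying `f`, and vanishes on words that do not start with `q`. It expresses
that a factor `q` is read at the beginning of the word. -/
def afterPrefix (q : List α) : (List α → R) →ₗ[R] (List α → R) where
  toFun f w := if q <+: w then f (w.drop q.length) else 0
  map_add' f g := by ext w; simp [ite_add_ite]
  map_smul' c f := by ext w; simp

theorem afterPrefix_apply (q : List α) (f : List α → R) (w : List α) :
    afterPrefix q f w = if q <+: w then f (w.drop q.length) else 0 := rfl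

theorem afterPrefix_nil (f : List α → R) : afterPrefix [] f = f := by
  ext w; simp [afterPrefix_apply]

theorem afterPrefix_cons (a : α) (q : List α) (f : List α → R) :
    afterPrefix (a :: q) f = afterPrefix [a] (afterPrefix q f) := by
  ext w
  cases w <;> simp [afterPrefix_apply, ite_and]

theorem afterPrefix_mul_afterPrefix (q : List α) (f g : List α → R) :
    afterPrefix q f * afterPrefix q g = afterPrefix q (f * g) := by
  ext w
  simp only [Pi.mul_apply, afterPrefix_apply, ite_mul_ite, mul_zero]

theorem afterPrefix_singleton_mul_of_ne {a b : α} (hab : a ≠ b) (f g : List α → R) :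
    afterPrefix [a] f * afterPrefix [b] g = 0 := by
  ext w
  cases w with
  | nil => simp [afterPrefix_apply]
  | cons c w =>
    rcases eq_or_ne a c with rfl | hac
    · simp [afterPrefix_apply, hab.symm]
    · simp [afterPrefix_apply, hac]

theorem afterPrefix_singleton_mul_suffixSum (a : α) (f g : List α → R) :
    afterPrefix [a] f * suffixSum g =
      afterPrefix [a] f * g + afterPrefix [a] (f * suffixSum g) := by
  ext w
  cases w with
  | nil => simp [afterPrefix_apply]
  | cons b w => by_cases hab : a = b <;> simp [afterPrefix_apply, suffixSum_cons, hab, mul_add]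

theorem suffixSum_afterPrefix_mul (a b : α) (f g : List α → R) :
    suffixSum (afterPrefix [a] f) * suffixSum (afterPrefix [b] g) =
      suffixSum (afterPrefix [a] (f * suffixSum (afterPrefix [b] g))) +
        suffixSum (afterPrefix [b] (g * suffixSum (afterPrefix [a] f))) +
        suffixSum (afterPrefix [a] f * afterPrefix [b] g) := by
  rw [suffixSum_mul_suffixSum, afterPrefix_singleton_mul_suffixSum,
    afterPrefix_singleton_mul_suffixSum, ← map_add, ← map_add]
  congr 1
  ring

variable (R) in
/-- The occurrence function `w ↦ |w|_Q` of a generalized subsequence `Q`, with values in the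
coefficient ring `R` of the linear combinations. -/
def gsFun (Q : List (List α)) : List α → R := fun w => gsCount Q w

theorem gsFun_nil : gsFun R ([] : List (List α)) = 1 := by
  ext w; simp [gsFun, gsCount]

theorem gsFun_cons (q : List α) (Q : List (List α)) :
    gsFun R (q :: Q) = suffixSum (afterPrefix q (gsFun R Q)) := by
  ext w
  have vanish_of_short : ∀ i ∈ Finset.range (w.length + 1),
      i ∉ Finset.range (w.length + 1 - q.length) → afterPrefix q (gsFun R Q) (w.drop i) = 0 := by
    intro i hi hi'
    refine if_neg fun h => ?_
    have := h.length_le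
    simp only [Finset.mem_range, List.length_drop] at hi hi' this
    omega
  rw [suffixSum_apply, ← Finset.sum_subset (by simp) vanish_of_short]
  simp [gsFun, gsCount, afterPrefix_apply, List.prefix_iff_eq_take, eq_comm]

theorem gsFun_cons_cons (a : α) (q : List α) (Q : List (List α)) :
    gsFun R ((a :: q) :: Q) = suffixSum (afterPrefix [a] (afterPrefix q (gsFun R Q))) := by
  rw [gsFun_cons, afterPrefix_cons]

variable (R α) in
/-- The functions of words defined by linear generalized subword histories with coefficients in
`R`: the span of the occurrence functions of generalized subsequences. -/
def gsSpan : Submodule R (List α → R) :=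
  Submodule.span R (gsFun R '' {Q | Q ≠ [] ∧ ∀ q ∈ Q, q ≠ []})

variable (R α) in
/-- The span of the functions counting the occurrences of `q • Q` whose first factor `q` is anchored
at the beginning of the word, in which products of occurrence functions are expanded. Both `q` and
`Q` may be empty, so that it contains the constants and `gsSpan R α`. -/
def anchoredSpan : Submodule R (List α → R) :=
  Submodule.span R {f | ∃ q Q, (∀ p ∈ Q, p ≠ []) ∧ afterPrefix q (gsFun R Q) = f}

theorem afterPrefix_gsFun_mem_anchoredSpan (q : List α) {Q : List (List α)}
    (hQ : ∀ p ∈ Q, p ≠ []) : afterPrefix q (gsFun R Q) ∈ anchoredSpan R α :=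
  Submodule.subset_span ⟨q, Q, hQ, rfl⟩

theorem gsFun_mem_anchoredSpan {Q : List (List α)} (hQ : ∀ p ∈ Q, p ≠ []) :
    gsFun R Q ∈ anchoredSpan R α := by
  simpa only [afterPrefix_nil] using afterPrefix_gsFun_mem_anchoredSpan (R := R) [] hQ

theorem one_mem_anchoredSpan : (1 : List α → R) ∈ anchoredSpan R α :=
  gsFun_nil (R := R) (α := α) ▸ gsFun_mem_anchoredSpan (by simp)

theorem gsSpan_le_anchoredSpan : gsSpan R α ≤ anchoredSpan R α :=
  Submodule.span_le.2 <| Set.image_subset_iff.2 fun _ hQ => gsFun_mem_anchoredSpan hQ.2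

theorem afterPrefix_mem_anchoredSpan (a : α) {f : List α → R} (hf : f ∈ anchoredSpan R α) :
    afterPrefix [a] f ∈ anchoredSpan R α := by
  suffices anchoredSpan R α ≤ (anchoredSpan R α).comap (afterPrefix [a]) from this hf
  refine Submodule.span_le.2 ?_
  rintro _ ⟨q, Q, hQ, rfl⟩
  exact Submodule.subset_span ⟨a :: q, Q, hQ, afterPrefix_cons a q _⟩

theorem suffixSum_afterPrefix_mem_gsSpan (a : α) {f : List α → R} (hf : f ∈ anchoredSpan R α) :
    suffixSum (afterPrefix [a] f) ∈ gsSpan R α := by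
  suffices anchoredSpan R α ≤ (gsSpan R α).comap (suffixSum ∘ₗ afterPrefix [a]) from this hf
  refine Submodule.span_le.2 ?_
  rintro _ ⟨q, Q, hQ, rfl⟩
  exact Submodule.subset_span
    ⟨(a :: q) :: Q, ⟨by simp, by simpa using hQ⟩, gsFun_cons_cons a q Q⟩

theorem suffixSum_afterPrefix_mem_anchoredSpan (a : α) {f : List α → R}
    (hf : f ∈ anchoredSpan R α) : suffixSum (afterPrefix [a] f) ∈ anchoredSpan R α :=
  gsSpan_le_anchoredSpan (suffixSum_afterPrefix_mem_gsSpan a hf)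

theorem exists_gsFun_eq_suffixSum_afterPrefix {Q : List (List α)} (hQ₀ : Q ≠ [])
    (hQ : ∀ q ∈ Q, q ≠ []) :
    ∃ a, ∃ f ∈ anchoredSpan R α, gsFun R Q = suffixSum (afterPrefix [a] f) := by
  obtain ⟨p, Q, rfl⟩ := List.exists_cons_of_ne_nil hQ₀
  rw [List.forall_mem_cons] at hQ
  obtain ⟨hp, hQ⟩ := hQ
  obtain ⟨a, q, rfl⟩ := List.exists_cons_of_ne_nil hp
  exact ⟨a, _, afterPrefix_gsFun_mem_anchoredSpan q hQ, gsFun_cons_cons a q Q⟩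

theorem anchoredSpan_le {M : Submodule R (List α → R)} (one : 1 ∈ M)
    (afterPrefix_mem : ∀ a, ∀ f ∈ anchoredSpan R α, f ∈ M → afterPrefix [a] f ∈ M)
    (suffixSum_mem : ∀ a, ∀ f ∈ anchoredSpan R α, f ∈ M → suffixSum (afterPrefix [a] f) ∈ M) :
    anchoredSpan R α ≤ M := by
  have prepend : ∀ Q : List (List α), (∀ p ∈ Q, p ≠ []) → gsFun R Q ∈ M →
      ∀ q, afterPrefix q (gsFun R Q) ∈ M := by
    intro Q hQ hM q
    induction q with
    | nil => rwa [afterPrefix_nil]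
    | cons a q ih =>
      rw [afterPrefix_cons]
      exact afterPrefix_mem a _ (afterPrefix_gsFun_mem_anchoredSpan q hQ) ih
  have gsFun_mem : ∀ Q : List (List α), (∀ p ∈ Q, p ≠ []) → gsFun R Q ∈ M := by
    intro Q hQ
    induction Q with
    | nil => rwa [gsFun_nil]
    | cons p Q ih =>
      rw [List.forall_mem_cons] at hQ
      obtain ⟨hp, hQ⟩ := hQ
      obtain ⟨a, q, rfl⟩ := List.exists_cons_of_ne_nil hp
      rw [gsFun_cons_cons]
      exact suffixSum_mem a _ (afterPrefix_gsFun_mem_anchoredSpan q hQ) (prepend Q hQ (ih hQ) q)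
  refine Submodule.span_le.2 ?_
  rintro _ ⟨q, Q, hQ, rfl⟩
  exact prepend Q hQ (gsFun_mem Q hQ) q

section Products

variable {f g : List α → R}

theorem afterPrefix_mul_afterPrefix_mem_anchoredSpan (a b : α)
    (hfg : f * g ∈ anchoredSpan R α) :
    afterPrefix [a] f * afterPrefix [b] g ∈ anchoredSpan R α := by
  rcases eq_or_ne a b with rfl | hab
  · rw [afterPrefix_mul_afterPrefix]
    exact afterPrefix_mem_anchoredSpan a hfg
  · rw [afterPrefix_singleton_mul_of_ne hab]
    exact zero_mem _

theorem suffixSum_afterPrefix_mul_afterPrefix_mem_gsSpan (a b : α)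
    (hfg : f * g ∈ anchoredSpan R α) :
    suffixSum (afterPrefix [a] f * afterPrefix [b] g) ∈ gsSpan R α := by
  rcases eq_or_ne a b with rfl | hab
  · rw [afterPrefix_mul_afterPrefix]
    exact suffixSum_afterPrefix_mem_gsSpan a hfg
  · rw [afterPrefix_singleton_mul_of_ne hab, map_zero]
    exact zero_mem _

theorem afterPrefix_mul_suffixSum_mem_anchoredSpan (a b : α) (hfg : f * g ∈ anchoredSpan R α)
    (hf : f * suffixSum (afterPrefix [b] g) ∈ anchoredSpan R α) :
    afterPrefix [a] f * suffixSum (afterPrefix [b] g) ∈ anchoredSpan R α := by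
  rw [afterPrefix_singleton_mul_suffixSum]
  exact add_mem (afterPrefix_mul_afterPrefix_mem_anchoredSpan a b hfg)
    (afterPrefix_mem_anchoredSpan a hf)

theorem suffixSum_mul_suffixSum_mem_gsSpan (a b : α) (hfg : f * g ∈ anchoredSpan R α)
    (hf : f * suffixSum (afterPrefix [b] g) ∈ anchoredSpan R α)
    (hg : g * suffixSum (afterPrefix [a] f) ∈ anchoredSpan R α) :
    suffixSum (afterPrefix [a] f) * suffixSum (afterPrefix [b] g) ∈ gsSpan R α := by
  rw [suffixSum_afterPrefix_mul]
  exact add_mem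
    (add_mem (suffixSum_afterPrefix_mem_gsSpan a hf) (suffixSum_afterPrefix_mem_gsSpan b hg))
    (suffixSum_afterPrefix_mul_afterPrefix_mem_gsSpan a b hfg)

theorem afterPrefix_mem_anchoredSpan_div (a : α) (hf : f ∈ anchoredSpan R α / anchoredSpan R α) :
    afterPrefix [a] f ∈ anchoredSpan R α / anchoredSpan R α := by
  rw [Submodule.mem_div_iff_forall_mul_mem] at hf
  suffices anchoredSpan R α ≤ (anchoredSpan R α).comap (LinearMap.mulLeft R (afterPrefix [a] f))
    from Submodule.mem_div_iff_forall_mul_mem.2 this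
  have hf_mem : f ∈ anchoredSpan R α := by simpa only [mul_one] using hf 1 one_mem_anchoredSpan
  refine anchoredSpan_le ?_ (fun b g hg _ => ?_) (fun b g hg _ => ?_)
  · simpa only [Submodule.mem_comap, LinearMap.mulLeft_apply, mul_one] using
      afterPrefix_mem_anchoredSpan a hf_mem
  · exact afterPrefix_mul_afterPrefix_mem_anchoredSpan a b (hf g hg)
  · exact afterPrefix_mul_suffixSum_mem_anchoredSpan a b (hf g hg)
      (hf _ (suffixSum_afterPrefix_mem_anchoredSpan b hg))

theorem suffixSum_afterPrefix_mem_anchoredSpan_div (a : α)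
    (hf : f ∈ anchoredSpan R α / anchoredSpan R α) :
    suffixSum (afterPrefix [a] f) ∈ anchoredSpan R α / anchoredSpan R α := by
  rw [Submodule.mem_div_iff_forall_mul_mem] at hf
  suffices anchoredSpan R α ≤
      (anchoredSpan R α).comap (LinearMap.mulRight R (suffixSum (afterPrefix [a] f)))
    from Submodule.mem_div_iff_forall_mul_mem.2 fun g hg => mul_comm g _ ▸ this hg
  have hf_mem : f ∈ anchoredSpan R α := by simpa only [mul_one] using hf 1 one_mem_anchoredSpan
  refine anchoredSpan_le ?_ (fun b g hg ih => ?_) (fun b g hg ih => ?_)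
  · simpa only [Submodule.mem_comap, LinearMap.mulRight_apply, one_mul] using
      suffixSum_afterPrefix_mem_anchoredSpan a hf_mem
  · exact afterPrefix_mul_suffixSum_mem_anchoredSpan b a (mul_comm f g ▸ hf g hg) ih
  · exact gsSpan_le_anchoredSpan (suffixSum_mul_suffixSum_mem_gsSpan b a
      (mul_comm f g ▸ hf g hg) ih (hf _ (suffixSum_afterPrefix_mem_anchoredSpan b hg)))

end Products

theorem anchoredSpan_mul_self_le : anchoredSpan R α * anchoredSpan R α ≤ anchoredSpan R α :=
  Submodule.le_div_iff_mul_le.1 <| anchoredSpan_le (Submodule.one_mem_div.2 le_rfl)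
    (fun a _ _ hf => afterPrefix_mem_anchoredSpan_div a hf)
    (fun a _ _ hf => suffixSum_afterPrefix_mem_anchoredSpan_div a hf)

theorem gsSpan_mul_self_le : gsSpan R α * gsSpan R α ≤ gsSpan R α := by
  have mul_mem : ∀ f ∈ anchoredSpan R α, ∀ g ∈ anchoredSpan R α, f * g ∈ anchoredSpan R α :=
    Submodule.mul_le.1 anchoredSpan_mul_self_le
  conv_lhs => rw [gsSpan, Submodule.span_mul_span]
  refine Submodule.span_le.2 ?_
  rintro _ ⟨_, ⟨Q, ⟨hQ₀, hQ⟩, rfl⟩, _, ⟨P, ⟨hP₀, hP⟩, rfl⟩, rfl⟩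
  obtain ⟨a, f, hf, hQf⟩ := exists_gsFun_eq_suffixSum_afterPrefix (R := R) hQ₀ hQ
  obtain ⟨b, g, hg, hPg⟩ := exists_gsFun_eq_suffixSum_afterPrefix (R := R) hP₀ hP
  simp only [hQf, hPg]
  exact suffixSum_mul_suffixSum_mem_gsSpan a b (mul_mem f hf g hg)
    (mul_mem f hf _ (suffixSum_afterPrefix_mem_anchoredSpan b hg))
    (mul_mem g hg _ (suffixSum_afterPrefix_mem_anchoredSpan a hf))

theorem value_mem_gsSpan (G : GSH α) (hG : G.WF) : G.value ∈ gsSpan ℤ α := by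
  induction G with
  | mono Q => exact Submodule.subset_span ⟨Q, hG, rfl⟩
  | neg G ih => exact neg_mem (ih hG)
  | add G₁ G₂ ih₁ ih₂ => exact add_mem (ih₁ hG.1) (ih₂ hG.2)
  | mul G₁ G₂ ih₁ ih₂ =>
    exact gsSpan_mul_self_le (Submodule.mul_mem_mul (ih₁ hG.1) (ih₂ hG.2))

theorem exists_eq_sum_of_mem_gsSpan {f : List α → R} (hf : f ∈ gsSpan R α) :
    ∃ (r : ℕ) (c : Fin r → R) (P : Fin r → List (List α)),
      (∀ i, P i ≠ [] ∧ ∀ q ∈ P i, q ≠ []) ∧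
      ∀ w : List α, f w = ∑ i, c i * (gsCount (P i) w : R) := by
  obtain ⟨r, c, g, rfl⟩ := Submodule.mem_span_set'.1 hf
  choose P hP hPg using fun i => (g i).2
  refine ⟨r, c, P, hP, fun w => ?_⟩
  simp only [← hPg, Finset.sum_apply, Pi.smul_apply, smul_eq_mul, gsFun]

end GSH

theorem stmt13_general {α : Type*} [DecidableEq α]
    (G : GSH α) (hG : G.WF) :
    ∃ (r : ℕ) (c : Fin r → ℤ) (P : Fin r → List (List α)),
      (∀ i, P i ≠ [] ∧ ∀ q ∈ P i, q ≠ []) ∧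
      ∀ w : List α, G.value w = ∑ i, c i * (gsCount (P i) w : ℤ) :=
  GSH.exists_eq_sum_of_mem_gsSpan (G.value_mem_gsSpan hG)

theorem stmt13 {α : Type*} [Fintype α] [DecidableEq α]
    (G : GSH α) (hG : G.WF) :
    ∃ (r : ℕ) (c : Fin r → ℤ) (P : Fin r → List (List α)),
      (∀ i, P i ≠ [] ∧ ∀ q ∈ P i, q ≠ []) ∧
      ∀ w : List α, G.value w = ∑ i, c i * (gsCount (P i) w : ℤ) :=
  stmt13_general G hG
end
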